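/- arXiv:1910.10943 — 2 statements merged into one kernel-verified Lean document; each statement's English description precedes it below -/
import Mathlib

section
/- If L and L' are even lattices, each of signature (1,9), rank 10, and discriminant -13, primitively embedded in the K3 lattice Λ_{K3}, then the discriminant form of U ⊕ L' is isomorphic to the negative of the discriminant form of L; consequently the discriminant of U ⊕ L' equals 13 = -disc(L). -/
open Matrix

/-- The bilinear form attached to a Gram matrix `G`. -/
def BF {ι : Type*} [Fintype ι] (G : Matrix ι ι ℤ) (x y : ι → ℤ) : ℤ :=
  x ⬝ᵥ G.mulVec y

/-- The hyperbolic plane `U`. -/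
def UMat : Matrix (Fin 2) (Fin 2) ℤ := !![0, 1; 1, 0]

/-- The (negative definite) root lattice `A₁`. -/
def A1Mat : Matrix (Fin 1) (Fin 1) ℤ := !![-2]

/-- The (negative definite) root lattice `A₂`. -/
def A2Mat : Matrix (Fin 2) (Fin 2) ℤ := !![-2, 1; 1, -2]

/-- The negative definite root lattice `E₈` (Bourbaki numbering). -/
def E8Mat : Matrix (Fin 8) (Fin 8) ℤ :=
  !![-2,0,1,0,0,0,0,0;
     0,-2,0,1,0,0,0,0;
     1,0,-2,1,0,0,0,0;
     0,1,1,-2,1,0,0,0;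
     0,0,0,1,-2,1,0,0;
     0,0,0,0,1,-2,1,0;
     0,0,0,0,0,1,-2,1;
     0,0,0,0,0,0,1,-2]

/-- The negative definite root lattice `E₇` (first seven Bourbaki nodes of `E₈`). -/
def E7Mat : Matrix (Fin 7) (Fin 7) ℤ :=
  E8Mat.submatrix (Fin.castLE (by norm_num)) (Fin.castLE (by norm_num))

/-- The negative definite root lattice `E₆` (first six Bourbaki nodes of `E₈`). -/
def E6Mat : Matrix (Fin 6) (Fin 6) ℤ :=
  E8Mat.submatrix (Fin.castLE (by norm_num)) (Fin.castLE (by norm_num))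

/-- Orthogonal direct sum of Gram matrices. -/
def dsum {ι κ : Type*} (G : Matrix ι ι ℤ) (H : Matrix κ κ ℤ) :
    Matrix (ι ⊕ κ) (ι ⊕ κ) ℤ :=
  Matrix.fromBlocks G 0 0 H

/-- Index type for the K3 lattice `U^{⊕3} ⊕ E₈^{⊕2}`. -/
abbrev K3Ix : Type := (Fin 2 ⊕ Fin 2 ⊕ Fin 2) ⊕ (Fin 8 ⊕ Fin 8)

/-- Gram matrix of the K3 lattice `U^{⊕3} ⊕ E₈^{⊕2}`. -/
def K3Mat : Matrix K3Ix K3Ix ℤ := dsum (dsum UMat (dsum UMat UMat)) (dsum E8Mat E8Mat)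

/-- `f` is a primitive isometric embedding of the lattice with Gram matrix `G`
into the lattice with Gram matrix `H` (primitive: the image is closed under division). -/
def IsPrimEmb {ι κ : Type*} [Fintype ι] [Fintype κ] (G : Matrix ι ι ℤ) (H : Matrix κ κ ℤ)
    (f : (ι → ℤ) →ₗ[ℤ] (κ → ℤ)) : Prop :=
  Function.Injective f ∧ (∀ x y, BF H (f x) (f y) = BF G x y) ∧
    ∀ (c : ℤ) (x : κ → ℤ), c ≠ 0 → c • x ∈ LinearMap.range f → x ∈ LinearMap.range f

/-- The orthogonal complement of a submodule with respect to the form given by `H`. -/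
def orthComp {κ : Type*} [Fintype κ] (H : Matrix κ κ ℤ) (S : Submodule ℤ (κ → ℤ)) :
    Submodule ℤ (κ → ℤ) where
  carrier := {x | ∀ y ∈ S, BF H x y = 0}
  add_mem' := by
    intro a b ha hb y hy
    have h1 := ha y hy
    have h2 := hb y hy
    simp only [BF, add_dotProduct] at *
    omega
  zero_mem' := by
    intro y hy
    simp [BF]
  smul_mem' := by
    intro c a ha y hy
    have h1 := ha y hy
    simp only [BF, smul_dotProduct] at *
    simp [h1]

/-- The two lattices given by Gram matrices `G`, `H` are isometric. -/
def IsomGram {ι κ : Type*} [Fintype ι] [Fintype κ] (G : Matrix ι ι ℤ) (H : Matrix κ κ ℤ) : Prop :=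
  ∃ e : (ι → ℤ) ≃ₗ[ℤ] (κ → ℤ), ∀ x y, BF H (e x) (e y) = BF G x y

/-- The submodule `S` of the lattice with Gram matrix `H`, equipped with the restricted
form, is isometric to the lattice with Gram matrix `G`. -/
def SubIsom {ι κ : Type*} [Fintype ι] [Fintype κ] (H : Matrix κ κ ℤ)
    (S : Submodule ℤ (κ → ℤ)) (G : Matrix ι ι ℤ) : Prop :=
  ∃ e : (ι → ℤ) ≃ₗ[ℤ] S, ∀ x y, BF H (e x : κ → ℤ) (e y : κ → ℤ) = BF G x y

/-- The lattice with Gram matrix `G` is even. -/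
def EvenGram {ι : Type*} [Fintype ι] (G : Matrix ι ι ℤ) : Prop := ∀ x, 2 ∣ BF G x x

/-- The lattice with Gram matrix `G` has signature `(p, q)`. -/
def SigIs {ι : Type*} [Fintype ι] [DecidableEq ι] (G : Matrix ι ι ℤ) (p q : ℕ) : Prop :=
  ∃ d : ι → ℝ, (∀ i, d i = 1 ∨ d i = -1) ∧ Nat.card {i // d i = 1} = p ∧
    Nat.card {i // d i = -1} = q ∧
    ∃ P : Matrix ι ι ℝ, IsUnit P.det ∧
      Pᵀ * (G.map (Int.cast : ℤ → ℝ)) * P = Matrix.diagonal d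

/-- The discriminant group `A_L = L^*/L` of a lattice with Gram matrix `G`,
realized as the cokernel of `G`. -/
abbrev Coker {ι : Type*} [Fintype ι] [DecidableEq ι] (G : Matrix ι ι ℤ) :=
  (ι → ℤ) ⧸ LinearMap.range (Matrix.toLin' G)

/-- The value `x᷉ᵀ G⁻¹ x` of the discriminant quadratic form at (the class of) `x`. -/
noncomputable def qval {ι : Type*} [Fintype ι] [DecidableEq ι] (G : Matrix ι ι ℤ) (x : ι → ℤ) : ℚ :=
  (fun i => (x i : ℚ)) ⬝ᵥ ((G.map (Int.cast : ℤ → ℚ))⁻¹).mulVec (fun i => (x i : ℚ))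

/-- The discriminant form of `G` is isomorphic to minus the discriminant form of `H`. -/
def QIsoNeg {ι κ : Type*} [Fintype ι] [DecidableEq ι] [Fintype κ] [DecidableEq κ]
    (G : Matrix ι ι ℤ) (H : Matrix κ κ ℤ) : Prop :=
  ∃ e : Coker G ≃+ Coker H, ∀ x : ι → ℤ, ∃ y : κ → ℤ,
    e (Submodule.Quotient.mk x) = Submodule.Quotient.mk y ∧
    qval G x + qval H y ∈ AddSubgroup.zmultiples (2 : ℚ)

/-- Inclusion of the first `U` summand into the K3 lattice. -/
def inU1 (x : Fin 2 → ℤ) : K3Ix → ℤ := Sum.elim (Sum.elim x 0) 0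

/-- Inclusion of the first `E₈` summand into the K3 lattice. -/
def inE81 (x : Fin 8 → ℤ) : K3Ix → ℤ := Sum.elim 0 (Sum.elim x 0)

/-- Inclusion of the second `E₈` summand into the K3 lattice. -/
def inE82 (x : Fin 8 → ℤ) : K3Ix → ℤ := Sum.elim 0 (Sum.elim 0 x)

/-!
The proof rests on Milgram's formula: for an even lattice `L` of signature `(a, b)`, the sum of
`exp (π i q)` over the discriminant group is `√|det L| * exp (π i (a - b) / 4)`. Both sides are
multiplied by the index on passing to a finite-index sublattice, because the sum over the cosets of
`L` in the larger discriminant group kills everything outside `L*`. So one may take a diagonal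
sublattice, where the formula is a product of one-dimensional quadratic Gauss sums; these are read
off from the asymptotics of the theta function near the cusp `1 / (2 a)`, computed once with the
modular transformation and once by splitting the series into residue classes.

If `|det L| = p` is an odd prime, then `exp (π i q)` is `k ↦ ψ (m k²)` on `ℤ / p`, for a primitive
additive character `ψ`. When the signatures of two such lattices add up to a multiple of `8`, the
product of their Gauss sums is `p` by Milgram's formula and `(-m n / p) * p` by the classical
evaluation of squared Gauss sums. Hence `-m n` is a square, and a rescaling of `ℤ / p` takes one
form to the negative of the other. The plane `U` contributes determinant `-1` and signature `0`.
-/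

section QuadraticGaussSum

open Complex Filter Topology HurwitzZeta

lemma tendsto_jacobiTheta_comap_im_atTop : Tendsto jacobiTheta (comap im atTop) (𝓝 1) := by
  have hexp : Tendsto (fun τ : ℂ => Real.exp (-Real.pi * τ.im)) (comap im atTop) (𝓝 0) :=
    Real.tendsto_exp_atBot.comp
      (tendsto_comap.const_mul_atTop_of_neg (neg_lt_zero.2 Real.pi_pos))
  simpa using (isBigO_at_im_infty_jacobiTheta_sub_one.trans_tendsto hexp).add_const 1

lemma tendsto_jacobiTheta_ofReal_add_I_mul (x : ℝ) {c : ℝ} (hc : 0 < c) :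
    Tendsto (fun ε : ℝ => jacobiTheta (x + I * (1 / (c * ε) : ℝ))) (𝓝[>] 0) (𝓝 1) := by
  refine tendsto_jacobiTheta_comap_im_atTop.comp (tendsto_comap_iff.2 ?_)
  have him (ε : ℝ) : (x + I * (1 / (c * ε) : ℝ) : ℂ).im = c⁻¹ * ε⁻¹ := by
    rw [add_im, ofReal_im, I_mul_im, ofReal_re, zero_add, one_div, mul_inv]
  simpa only [Function.comp_def, him] using
    tendsto_inv_nhdsGT_zero.const_mul_atTop (inv_pos.2 hc)

lemma jacobiTheta_two_mul_natCast_add (a : ℕ) (τ : ℂ) :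
    jacobiTheta (2 * a + τ) = jacobiTheta τ := by
  induction a with
  | zero => simp
  | succ n ih =>
    rw [← ih, ← jacobiTheta_two_add (2 * n + τ)]
    congr 1
    push_cast
    ring

lemma jacobiTheta_eq_inv_cpow_mul (τ : ℂ) :
    jacobiTheta τ = ((-I * τ) ^ (1 / 2 : ℂ))⁻¹ * jacobiTheta (-1 / τ) := by
  rw [jacobiTheta_eq_jacobiTheta₂, jacobiTheta_eq_jacobiTheta₂, jacobiTheta₂_functional_equation]
  simp

lemma ofReal_mul_cpow_one_half {r : ℝ} (hr : 0 < r) {z : ℂ} (hz : z ≠ 0) :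
    ((r : ℂ) * z) ^ (1 / 2 : ℂ) = (√r : ℂ) * z ^ (1 / 2 : ℂ) := by
  have hr0 : (r : ℂ) ≠ 0 := mod_cast hr.ne'
  rw [cpow_def_of_ne_zero (mul_ne_zero hr0 hz), cpow_def_of_ne_zero hz, log_ofReal_mul hr hz,
    add_mul, Complex.exp_add, Real.sqrt_eq_rpow, ofReal_cpow hr.le, cpow_def_of_ne_zero hr0,
    ofReal_log hr.le]
  simp

lemma one_add_I_mul_ofReal_ne_zero (x : ℝ) : 1 + I * x ≠ 0 := fun h => by
  simpa using congrArg re h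

/-- The factors come from moving `1 / (2 * a) + iε`, near a cusp, to the cusp `i∞` by `S T²ᵃ S`,
where `S τ = -1 / τ` and `T τ = τ + 1`. -/
lemma sqrt_mul_jacobiTheta_one_div_add {a : ℕ} (ha : 0 < a) {ε : ℝ} (hε : 0 < ε) :
    √ε * jacobiTheta (1 / (2 * a) + I * ε) =
      ((-I * (1 / (2 * a) + I * ε)) ^ (1 / 2 : ℂ))⁻¹ *
        (((2 * a) ^ 2 / (1 + I * (2 * a * ε : ℝ))) ^ (1 / 2 : ℂ))⁻¹ *
        jacobiTheta (-1 / (2 * a) + I * (1 / ((2 * a) ^ 2 * ε) : ℝ)) := by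
  have ha0 : (a : ℂ) ≠ 0 := mod_cast ha.ne'
  have hε0 : (ε : ℂ) ≠ 0 := mod_cast hε.ne'
  have hsqrt : (√ε : ℂ) ≠ 0 := mod_cast (Real.sqrt_pos.2 hε).ne'
  have hden := one_add_I_mul_ofReal_ne_zero (2 * a * ε)
  set z : ℂ := (2 * a) ^ 2 / (1 + I * (2 * a * ε : ℝ)) with hz
  have hz0 : z ≠ 0 := div_ne_zero (pow_ne_zero 2 (mul_ne_zero two_ne_zero ha0)) hden
  have hτ : (1 / (2 * a) + I * ε : ℂ) = (1 + I * (2 * a * ε : ℝ)) / (2 * a) := by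
    push_cast
    field_simp
  have hS : 2 * a + -1 / (1 / (2 * a) + I * ε : ℂ) = I * (ε * z) := by
    rw [hτ, hz]
    field_simp
    push_cast
    ring
  have hSTS : -1 / (I * (ε * z)) = -1 / (2 * a) + I * (1 / ((2 * a) ^ 2 * ε) : ℝ) := by
    rw [hz]
    push_cast
    field_simp
    linear_combination (-1 : ℂ) * I_sq
  have hrot : -I * (I * (ε * z)) = ε * z := by linear_combination -(ε * z) * I_sq
  rw [jacobiTheta_eq_inv_cpow_mul (1 / (2 * a) + I * ε),
    ← jacobiTheta_two_mul_natCast_add a (-1 / _), hS, jacobiTheta_eq_inv_cpow_mul (I * _),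
    hSTS, hrot, ofReal_mul_cpow_one_half hε hz0]
  field_simp

lemma neg_I_mul_cpow_one_half {r : ℝ} (hr : 0 < r) :
    (-I * r) ^ (1 / 2 : ℂ) = √r * cexp (-(Real.pi / 4 * I)) := by
  rw [mul_comm, ofReal_mul_cpow_one_half hr (neg_ne_zero.2 I_ne_zero),
    cpow_def_of_ne_zero (neg_ne_zero.2 I_ne_zero), log_neg_I]
  congr 2
  ring

lemma tendsto_inv_cpow_one_half {g : ℝ → ℂ} (hg : ContinuousAt g 0) (h0 : g 0 ∈ slitPlane) :
    Tendsto (fun ε => (g ε ^ (1 / 2 : ℂ))⁻¹) (𝓝[>] 0) (𝓝 (g 0 ^ (1 / 2 : ℂ))⁻¹) :=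
  ((hg.cpow continuousAt_const h0).inv₀
    (by simp [cpow_eq_zero_iff, slitPlane_ne_zero h0])).mono_left nhdsWithin_le_nhds

lemma tendsto_sqrt_mul_jacobiTheta {a : ℕ} (ha : 0 < a) :
    Tendsto (fun ε : ℝ => √ε * jacobiTheta (1 / (2 * a) + I * ε)) (𝓝[>] 0)
      (𝓝 (cexp (Real.pi / 4 * I) / √(2 * a))) := by
  have hd : (0 : ℝ) < 2 * a := by positivity
  have hfirst := tendsto_inv_cpow_one_half (g := fun ε => -I * (1 / (2 * a) + I * ε))
    (by fun_prop) (by simp [slitPlane, ← ofReal_natCast, ha.ne'])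
  have hsecond := tendsto_inv_cpow_one_half (g := fun ε => (2 * a) ^ 2 / (1 + I * (2 * a * ε : ℝ)))
    (.div continuousAt_const (by fun_prop) (one_add_I_mul_ofReal_ne_zero _))
    (by
      have hpos : (0 : ℝ) < (2 * a) ^ 2 := by positivity
      simpa using ofReal_mem_slitPlane.2 hpos)
  have hthird := tendsto_jacobiTheta_ofReal_add_I_mul (-1 / (2 * a)) (pow_pos hd 2)
  rw [show ((-1 / (2 * a) : ℝ) : ℂ) = -1 / (2 * a) by push_cast; rfl] at hthird
  have hlim : ((-I * (1 / (2 * a) + I * (0 : ℝ))) ^ (1 / 2 : ℂ))⁻¹ *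
      (((2 * a) ^ 2 / (1 + I * (2 * a * 0 : ℝ))) ^ (1 / 2 : ℂ))⁻¹ * 1 =
      cexp (Real.pi / 4 * I) / √(2 * a) := by
    have hsqrt : (√(2 * a) : ℂ) ≠ 0 := mod_cast (Real.sqrt_pos.2 hd).ne'
    have hsq : (√(2 * a) : ℂ) ^ 2 = (2 * a : ℝ) := mod_cast congrArg ofReal (Real.sq_sqrt hd.le)
    have hfst : -I * (1 / (2 * a) + I * (0 : ℝ)) = -I * (1 / (2 * a) : ℝ) := by simp
    have hsnd : ((2 * a) ^ 2 / (1 + I * (2 * a * 0 : ℝ)) : ℂ) = ((2 * a : ℝ) ^ 2 : ℝ) * 1 := by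
      simp
    rw [hfst, hsnd, neg_I_mul_cpow_one_half (by positivity), ofReal_mul_cpow_one_half
      (by positivity) one_ne_zero, Real.sqrt_sq hd.le, one_div, Real.sqrt_inv,
      Complex.exp_neg, ← hsq]
    push_cast
    field_simp
    simp
  rw [← hlim]
  exact ((hfirst.mul hsecond).mul hthird).congr' (eventually_nhdsWithin_of_forall fun ε hε =>
    (sqrt_mul_jacobiTheta_one_div_add ha hε).symm)

lemma tendsto_sqrt_mul_evenKernel (b : UnitAddCircle) {c : ℝ} (hc : 0 < c) :
    Tendsto (fun ε : ℝ => √ε * evenKernel b (c ^ 2 * ε)) (𝓝[>] 0) (𝓝 c⁻¹) := by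
  have harg : Tendsto (fun ε : ℝ => 1 / (c ^ 2 * ε)) (𝓝[>] 0) atTop := by
    simp_rw [one_div, mul_inv]
    exact tendsto_inv_nhdsGT_zero.const_mul_atTop (by positivity)
  obtain ⟨p, hp, hO⟩ := isBigO_atTop_cosKernel_sub b
  have hexp : Tendsto (fun x : ℝ => Real.exp (-p * x)) atTop (𝓝 0) :=
    Real.tendsto_exp_atBot.comp (tendsto_id.const_mul_atTop_of_neg (neg_lt_zero.2 hp))
  have hcos : Tendsto (fun ε : ℝ => c⁻¹ * cosKernel b (1 / (c ^ 2 * ε))) (𝓝[>] 0) (𝓝 c⁻¹) := by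
    simpa [Function.comp_def] using
      (((hO.trans_tendsto hexp).comp harg).add_const 1).const_mul c⁻¹
  refine hcos.congr' (eventually_nhdsWithin_of_forall fun ε hε => ?_)
  have hsqrt := (Real.sqrt_pos.2 hε).ne'
  beta_reduce
  rw [evenKernel_functional_equation, ← Real.sqrt_eq_rpow, Real.sqrt_mul (by positivity),
    Real.sqrt_sq hc.le]
  field_simp

section Periodic

variable {N : ℕ} [NeZero N] {f : ℤ → ℂ}

lemma hasSum_periodic_mul_exp_neg_sq (hf : Function.Periodic f N) {ε : ℝ} (hε : 0 < ε) :
    HasSum (fun n : ℤ => f n * (Real.exp (-Real.pi * n ^ 2 * ε) : ℂ))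
      (∑ r : Fin N, f r * (evenKernel ((r / N : ℝ) : UnitAddCircle) (N ^ 2 * ε) : ℂ)) := by
  have hN : (N : ℝ) ≠ 0 := mod_cast NeZero.ne N
  set F : ℤ → ℂ := fun n => f n * (Real.exp (-Real.pi * n ^ 2 * ε) : ℂ) with hF
  have hfiber (r : Fin N) : HasSum (fun m : ℤ => F (r + m * N))
      (f r * (evenKernel ((r / N : ℝ) : UnitAddCircle) (N ^ 2 * ε) : ℂ)) := by
    have hkernel := hasSum_ofReal.2 (hasSum_int_evenKernel (r / N : ℝ)
      (t := N ^ 2 * ε) (by positivity))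
    refine (hkernel.mul_left (f r)).congr_fun fun m => ?_
    have hexp : -Real.pi * ((r + m * N : ℤ) : ℝ) ^ 2 * ε =
        -Real.pi * (m + r / N : ℝ) ^ 2 * (N ^ 2 * ε) := by
      push_cast
      field_simp
      ring
    have hper : f (r + m * N) = f r := by simpa using hf.int_mul m r
    simp only [hF, hexp, hper]
  have hsum : Summable fun x : Fin N × ℤ => F (x.1 + x.2 * N) := by
    refine Summable.of_norm ((summable_prod_of_nonneg fun _ => norm_nonneg _).2
      ⟨fun r => (hfiber r).summable.norm, .of_finite⟩)
  have hprod := (hasSum_fintype _).unique (hsum.hasSum.prod_fiberwise hfiber)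
  rw [hprod, ← ((Equiv.prodComm _ _).trans (Int.divModEquiv N).symm).hasSum_iff]
  convert hsum.hasSum using 2 with x
  simp [Int.divModEquiv, add_comm]

lemma tendsto_sqrt_mul_tsum_periodic (hf : Function.Periodic f N) :
    Tendsto (fun ε : ℝ => √ε * ∑' n : ℤ, f n * (Real.exp (-Real.pi * n ^ 2 * ε) : ℂ)) (𝓝[>] 0)
      (𝓝 ((∑ r : Fin N, f r) * (N : ℂ)⁻¹)) := by
  have hN : (0 : ℝ) < N := mod_cast Nat.pos_of_ne_zero (NeZero.ne N)
  have hterm (r : Fin N) := ((continuous_ofReal.tendsto _).comp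
    (tendsto_sqrt_mul_evenKernel ((r / N : ℝ) : UnitAddCircle) hN)).const_mul (f r)
  rw [Finset.sum_mul]
  have hsum := tendsto_finsetSum Finset.univ fun r _ => hterm r
  push_cast at hsum
  refine hsum.congr' (eventually_nhdsWithin_of_forall fun ε hε => ?_)
  beta_reduce
  rw [(hasSum_periodic_mul_exp_neg_sq hf hε).tsum_eq, Finset.mul_sum]
  refine Finset.sum_congr rfl fun r _ => ?_
  simp only [Function.comp_apply]
  push_cast
  ring

end Periodic

theorem sum_exp_pi_mul_I_mul_sq_div {a : ℕ} (ha : 0 < a) :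
    ∑ r : Fin (2 * a), cexp (Real.pi * I * (r ^ 2 / (2 * a))) =
      √(2 * a) * cexp (Real.pi / 4 * I) := by
  have : NeZero (2 * a) := ⟨by omega⟩
  have ha0 : (a : ℂ) ≠ 0 := mod_cast ha.ne'
  set f : ℤ → ℂ := fun n => cexp (Real.pi * I * (n ^ 2 / (2 * a))) with hf
  have hper : Function.Periodic f (2 * a : ℕ) := fun n => by
    refine exp_eq_exp_iff_exists_int.2 ⟨n + a, ?_⟩
    push_cast
    field_simp
    ring
  have htheta (ε : ℝ) : ∑' n : ℤ, f n * (Real.exp (-Real.pi * n ^ 2 * ε) : ℂ) =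
      jacobiTheta (1 / (2 * a) + I * ε) := by
    refine tsum_congr fun n => ?_
    rw [hf, ofReal_exp, ← Complex.exp_add]
    congr 1
    push_cast
    linear_combination -(Real.pi * n ^ 2 * ε : ℂ) * I_sq
  have h := tendsto_nhds_unique (tendsto_sqrt_mul_jacobiTheta ha)
    (by simpa only [htheta] using tendsto_sqrt_mul_tsum_periodic hper)
  have hsqrt : (√(2 * a) : ℂ) ≠ 0 := mod_cast (Real.sqrt_pos.2 (by positivity)).ne'
  have hsq : (√(2 * a) : ℂ) ^ 2 = 2 * a := mod_cast Real.sq_sqrt (by positivity)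
  push_cast at h
  rw [← hsq, div_eq_mul_inv, eq_mul_inv_iff_mul_eq₀ (pow_ne_zero 2 hsqrt)] at h
  simp only [hf, Int.cast_natCast] at h
  rw [← h]
  field_simp

theorem sum_exp_pi_mul_I_mul_sq_div_int {d : ℤ} (hd : d ≠ 0) (hd2 : 2 ∣ d) :
    ∑ r : Fin d.natAbs, cexp (Real.pi * I * (r ^ 2 / d)) =
      √|(d : ℝ)| * cexp (Real.pi / 4 * I * d.sign) := by
  obtain ⟨a, ha⟩ : ∃ a : ℕ, d.natAbs = 2 * a := Int.natCast_dvd.1 hd2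
  have hpos := sum_exp_pi_mul_I_mul_sq_div (a := a) (by omega)
  rw [← Int.cast_abs, ← Nat.cast_natAbs, ha]
  rcases lt_or_gt_of_ne hd with hneg | hpos'
  · have hda : (d : ℂ) = -(2 * a) := by
      have : d = -(2 * a) := by omega
      simp [this]
    have hconj := congrArg (starRingEnd ℂ) hpos
    rw [map_sum, map_mul, conj_ofReal, ← exp_conj] at hconj
    simp only [← exp_conj] at hconj
    simpa [hda, Int.sign_eq_neg_one_of_neg hneg, div_neg, map_ofNat] using hconj
  · have hda : (d : ℂ) = 2 * a := by
      have : d = 2 * a := by omega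
      simp [this]
    simpa [hda, Int.sign_eq_one_of_pos hpos'] using hpos

end QuadraticGaussSum

section CharacterSums

variable {A B R : Type*} [AddCommGroup A] [CommRing R]

/-- On a coset `a + H` the function is `f a` times a character of `H`, unless it vanishes
identically, so only the cosets on which it is constant contribute to the sum. -/
lemma sum_eq_sum_filter_add_eq [IsDomain R] [CharZero R] [Fintype A] {f : A → R}
    (H : AddSubgroup A)
    (hf : ∀ a, ∀ h ∈ H, ∀ k ∈ H, f (a + h + k) * f a = f (a + h) * f (a + k))
    [DecidablePred fun a => ∀ h ∈ H, f (a + h) = f a] :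
    ∑ a, f a = ∑ a with ∀ h ∈ H, f (a + h) = f a, f a := by
  classical
  have hcoset (a : A) : ∑ h : H, f (a + h) =
      if ∀ h ∈ H, f (a + h) = f a then Nat.card H * f a else 0 := by
    split_ifs with ha
    · simp [Finset.sum_congr rfl fun (h : H) _ => ha h h.2]
    · push Not at ha
      obtain ⟨k, hk, hka⟩ := ha
      have hshift : f (a + k) * ∑ h : H, f (a + h) = f a * ∑ h : H, f (a + h) := by
        conv_rhs => rw [← Equiv.sum_comp (Equiv.addRight (⟨k, hk⟩ : H))]
        rw [Finset.mul_sum, Finset.mul_sum]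
        refine Finset.sum_congr rfl fun h _ => ?_
        have := hf a h h.2 k hk
        simp only [Equiv.coe_addRight, AddSubgroup.coe_add, ← add_assoc]
        linear_combination -this
      exact (mul_eq_zero.1 (by linear_combination hshift :
        (f (a + k) - f a) * ∑ h : H, f (a + h) = 0)).resolve_left (sub_ne_zero.2 hka)
  have htrans (h : H) : ∑ a, f (a + h) = ∑ a, f a := Equiv.sum_comp (Equiv.addRight (h : A)) f
  have hH : (Nat.card H : R) ≠ 0 := Nat.cast_ne_zero.2 Nat.card_pos.ne'
  refine mul_left_cancel₀ hH ?_
  calc (Nat.card H : R) * ∑ a, f a = ∑ h : H, ∑ a, f (a + h) := by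
        simp [htrans]
    _ = ∑ a, ∑ h : H, f (a + h) := Finset.sum_comm
    _ = Nat.card H * ∑ a with ∀ h ∈ H, f (a + h) = f a, f a := by
        simp_rw [hcoset, ← Finset.sum_filter, Finset.mul_sum]

lemma card_mul_sum_comp_of_surjective [Fintype A] [AddCommGroup B] [Fintype B] {φ : A →+ B}
    (hφ : Function.Surjective φ) (f : B → R) :
    Nat.card B * ∑ a, f (φ a) = Nat.card A * ∑ b, f b := by
  classical
  have hfiber (b : B) : (Finset.univ.filter fun a => φ a = b).card =
      (Finset.univ.filter fun a => φ a = 0).card :=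
    AddMonoidHom.card_fiber_eq_of_mem_range φ (hφ b) (hφ 0)
  have hcard : Fintype.card A = Fintype.card B * (Finset.univ.filter fun a => φ a = 0).card := by
    rw [← Finset.card_univ, Finset.card_eq_sum_card_fiberwise (t := Finset.univ) (f := φ) (by simp)]
    simp [hfiber]
  have hsum : ∑ a, f (φ a) = (Finset.univ.filter fun a => φ a = 0).card * ∑ b, f b := by
    rw [← Finset.sum_fiberwise Finset.univ φ, Finset.mul_sum]
    refine Finset.sum_congr rfl fun b _ => ?_
    rw [Finset.sum_congr rfl fun a ha => by rw [(Finset.mem_filter.1 ha).2], Finset.sum_const,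
      hfiber, nsmul_eq_mul]
  rw [hsum, Nat.card_eq_fintype_card, Nat.card_eq_fintype_card, hcard]
  push_cast
  ring

end CharacterSums

section DualForm

variable {ι : Type*} [Fintype ι] {G P : Matrix ι ι ℤ}

lemma intCast_comp_mulVec (x : ι → ℤ) :
    (fun i => ((P *ᵥ x) i : ℚ)) = P.map (Int.cast : ℤ → ℚ) *ᵥ fun i => (x i : ℚ) :=
  funext ((Int.castRingHom ℚ).map_mulVec P x)

lemma map_intCast_transpose_mul_mul (K : Type*) [Ring K] :
    (Pᵀ * G * P).map (Int.cast : ℤ → K) =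
      (P.map Int.cast)ᵀ * G.map Int.cast * P.map Int.cast := by
  ext
  simp [mul_apply]

lemma dotProduct_transpose_mul_mul_mulVec {R : Type*} [CommRing R] (A Q : Matrix ι ι R)
    (x y : ι → R) : x ⬝ᵥ (Qᵀ * A * Q) *ᵥ y = (Q *ᵥ x) ⬝ᵥ A *ᵥ (Q *ᵥ y) := by
  rw [← mulVec_mulVec, ← mulVec_mulVec, dotProduct_mulVec, vecMul_transpose]

variable [DecidableEq ι]

/-- A Gram matrix `G` of a nondegenerate even lattice. -/
structure IsEvenLattice (G : Matrix ι ι ℤ) : Prop where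
  isSymm : G.IsSymm
  even : EvenGram G
  det_ne_zero : G.det ≠ 0

/-- The `ℚ`-valued bilinear form `xᵀ G⁻¹ y` of the dual lattice, whose vectors are written in the
basis dual to the one with Gram matrix `G`; there the lattice itself is the image of `G`. -/
noncomputable def dualForm (G : Matrix ι ι ℤ) : LinearMap.BilinMap ℤ (ι → ℤ) ℚ :=
  LinearMap.mk₂ ℤ
    (fun x y => (fun i => (x i : ℚ)) ⬝ᵥ (G.map (Int.cast : ℤ → ℚ))⁻¹ *ᵥ fun i => (y i : ℚ))
    (fun x x' y => by
      simp only [Pi.add_apply, Int.cast_add, dotProduct, add_mul, Finset.sum_add_distrib])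
    (fun c x y => by
      simp only [Pi.smul_apply, smul_eq_mul, Int.cast_mul, dotProduct, zsmul_eq_mul,
        Finset.mul_sum, mul_assoc])
    (fun x y y' => by
      simp only [Pi.add_apply, Int.cast_add, dotProduct, mulVec, mul_add, Finset.sum_add_distrib])
    (fun c x y => by
      simp only [Pi.smul_apply, smul_eq_mul, Int.cast_mul, dotProduct, mulVec, zsmul_eq_mul,
        Finset.mul_sum, mul_left_comm])

lemma dualForm_apply (x y : ι → ℤ) : dualForm G x y =
    (fun i => (x i : ℚ)) ⬝ᵥ (G.map (Int.cast : ℤ → ℚ))⁻¹ *ᵥ fun i => (y i : ℚ) := rfl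

lemma qval_eq_dualForm (x : ι → ℤ) : qval G x = dualForm G x x := rfl

lemma isUnit_det_map_intCast (h : P.det ≠ 0) (K : Type*) [Field K] [CharZero K] :
    IsUnit (P.map (Int.cast : ℤ → K)).det := by
  have hcast : (P.map (Int.cast : ℤ → K)).det = P.det :=
    ((Int.castRingHom K).map_det P).symm
  rw [hcast, isUnit_iff_ne_zero]
  exact mod_cast h

lemma dualForm_mulVec_right (h : G.det ≠ 0) (x l : ι → ℤ) :
    dualForm G x (G *ᵥ l) = (x ⬝ᵥ l : ℤ) := by
  rw [dualForm_apply, intCast_comp_mulVec, mulVec_mulVec,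
    nonsing_inv_mul _ (isUnit_det_map_intCast h ℚ), one_mulVec]
  simp [dotProduct]

lemma dualForm_comm (h : G.IsSymm) (x y : ι → ℤ) : dualForm G x y = dualForm G y x := by
  have hinv : ((G.map (Int.cast : ℤ → ℚ))⁻¹).IsSymm := (h.map _).inv
  rw [dualForm_apply, dualForm_apply, dotProduct_comm, dotProduct_mulVec, ← mulVec_transpose, hinv]

lemma dualForm_transpose_mulVec (hP : P.det ≠ 0) (x y : ι → ℤ) :
    dualForm (Pᵀ * G * P) (Pᵀ *ᵥ x) (Pᵀ *ᵥ y) = dualForm G x y := by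
  have hP := isUnit_det_map_intCast hP ℚ
  have hPt : IsUnit (P.map (Int.cast : ℤ → ℚ))ᵀ.det := by rwa [det_transpose]
  rw [dualForm_apply, dualForm_apply, intCast_comp_mulVec, intCast_comp_mulVec,
    map_intCast_transpose_mul_mul, transpose_map, Matrix.mul_inv_rev, Matrix.mul_inv_rev,
    mulVec_mulVec, mul_assoc, mul_assoc, nonsing_inv_mul _ hPt, mul_one,
    mulVec_transpose, ← dotProduct_mulVec, mulVec_mulVec, ← mul_assoc,
    mul_nonsing_inv _ hP, one_mul]

lemma eq_transpose_mulVec_of_dualForm (hG : G.det ≠ 0) (hP : P.det ≠ 0) {u : ι → ℤ}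
    (hu : ∀ l, ∃ n : ℤ, dualForm (Pᵀ * G * P) u (Pᵀ *ᵥ (G *ᵥ l)) = n) :
    ∃ x, Pᵀ *ᵥ x = u := by
  choose n hn using hu
  have hlin (l : ι → ℤ) :
      dualForm (Pᵀ * G * P) u (Pᵀ *ᵥ (G *ᵥ l)) =
        ((fun i => n fun j => if i = j then 1 else 0) ⬝ᵥ l : ℤ) := by
    have hsum := LinearMap.pi_apply_eq_sum_univ
      (dualForm (Pᵀ * G * P) u ∘ₗ toLin' Pᵀ ∘ₗ toLin' G) l
    simp only [LinearMap.comp_apply, toLin'_apply, hn] at hsum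
    rw [hn, hsum]
    simp [dotProduct, mul_comm]
  refine ⟨fun i => n fun j => if i = j then 1 else 0, dotProduct_eq _ _ fun l => ?_⟩
  have hdet : (Pᵀ * G * P).det ≠ 0 := by simp [det_mul, hG, hP]
  have hDl : Pᵀ *ᵥ (G *ᵥ (P *ᵥ l)) = (Pᵀ * G * P) *ᵥ l := by
    simp only [mulVec_mulVec, mul_assoc]
  rw [mulVec_transpose, ← dotProduct_mulVec]
  exact_mod_cast (hlin (P *ᵥ l)).symm.trans (hDl ▸ dualForm_mulVec_right hdet u l)

end DualForm

section DiscriminantGaussSum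

open Complex

variable {ι : Type*} [Fintype ι] [DecidableEq ι] {G P : Matrix ι ι ℤ}

lemma card_coker (h : G.det ≠ 0) : Nat.card (Coker G) = G.det.natAbs := by
  have hinj : Function.Injective (toLin' G) := by
    rw [← LinearMap.ker_eq_bot, ker_toLin'_eq_bot_iff]
    exact fun v hv => eq_zero_of_mulVec_eq_zero h hv
  rw [← LinearMap.det_toLin' G]
  exact (Submodule.natAbs_det_equiv (LinearMap.range (toLin' G))
    (LinearEquiv.ofInjective _ hinj)).symm

lemma finite_coker (h : G.det ≠ 0) : Finite (Coker G) :=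
  Nat.finite_of_card_ne_zero (by simpa [card_coker h] using h)

/-- The map on cokernels induced by `Pᵀ`: for the finite-index sublattice `M = P ℤⁿ` of the lattice
`L` with Gram matrix `G` it is the inclusion `L* / M → M* / M`. -/
noncomputable def cokerTranspose (G P : Matrix ι ι ℤ) : Coker (G * P) →+ Coker (Pᵀ * G * P) :=
  (Submodule.mapQ _ _ (toLin' Pᵀ) (by
    rintro _ ⟨l, rfl⟩
    exact ⟨l, by simp [mul_assoc]⟩)).toAddMonoidHom

lemma cokerTranspose_mk (x : ι → ℤ) : cokerTranspose G P (Submodule.Quotient.mk x) =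
    Submodule.Quotient.mk (Pᵀ *ᵥ x) := rfl

lemma cokerTranspose_injective (hP : P.det ≠ 0) :
    Function.Injective (cokerTranspose G P) := by
  refine (injective_iff_map_eq_zero _).2 fun a ha => ?_
  obtain ⟨x, rfl⟩ := Submodule.Quotient.mk_surjective _ a
  obtain ⟨l, hl⟩ := (Submodule.Quotient.mk_eq_zero _).1 ha
  refine (Submodule.Quotient.mk_eq_zero _).2 ⟨l, mulVec_injective_of_det_ne_zero (m := ι)
    (M := Pᵀ) (by rwa [det_transpose]) ?_⟩
  simpa [mul_assoc] using hl

/-- The projection of cokernels `L* / M → L* / L`, for the sublattice `M = P ℤⁿ` of the lattice `L`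
with Gram matrix `G`. -/
def cokerProj (G P : Matrix ι ι ℤ) : Coker (G * P) →+ Coker G :=
  (Submodule.factor (by
    rintro _ ⟨l, rfl⟩
    exact ⟨P *ᵥ l, by simp⟩)).toAddMonoidHom

lemma cokerProj_mk (x : ι → ℤ) :
    cokerProj G P (Submodule.Quotient.mk x) = Submodule.Quotient.mk x := rfl

lemma cokerProj_surjective : Function.Surjective (cokerProj G P) := fun c => by
  obtain ⟨x, rfl⟩ := Submodule.Quotient.mk_surjective _ c
  exact ⟨_, cokerProj_mk x⟩

/-- The map `L → M* / M`, for the sublattice `M = P ℤⁿ` of the lattice `L` with Gram matrix `G`. -/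
noncomputable def latticeToCoker (G P : Matrix ι ι ℤ) : (ι → ℤ) →+ Coker (Pᵀ * G * P) :=
  (Submodule.mkQ _ ∘ₗ toLin' Pᵀ ∘ₗ toLin' G).toAddMonoidHom

lemma latticeToCoker_apply (l : ι → ℤ) :
    latticeToCoker G P l = Submodule.Quotient.mk (Pᵀ *ᵥ (G *ᵥ l)) := rfl

/-- The function `exp(πi q)` on the discriminant group, where `q` is the discriminant quadratic
form. It is evaluated on an arbitrary representative, which is harmless for even lattices. -/
noncomputable def discChar (G : Matrix ι ι ℤ) (c : Coker G) : ℂ :=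
  cexp (Real.pi * I * qval G (Function.surjInv (Submodule.Quotient.mk_surjective _) c))

/-- The Gauss sum of the discriminant form. -/
noncomputable def discGaussSum (G : Matrix ι ι ℤ) : ℂ := ∑ᶠ c, discChar G c

namespace IsEvenLattice

lemma qval_add (hG : IsEvenLattice G) (x y : ι → ℤ) :
    qval G (x + y) = qval G x + qval G y + 2 * dualForm G x y := by
  simp only [qval_eq_dualForm, map_add, LinearMap.add_apply, dualForm_comm hG.isSymm y x]
  ring

lemma cexp_qval_mulVec (hG : IsEvenLattice G) (l : ι → ℤ) :
    cexp (Real.pi * I * qval G (G *ᵥ l)) = 1 := by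
  obtain ⟨n, hn⟩ := hG.even l
  refine exp_eq_one_iff.2 ⟨n, ?_⟩
  rw [qval_eq_dualForm, dualForm_mulVec_right hG.det_ne_zero, dotProduct_comm, ← BF, hn]
  push_cast
  ring

lemma cexp_qval_add (hG : IsEvenLattice G) (x y : ι → ℤ) :
    cexp (Real.pi * I * qval G (x + y)) =
      cexp (Real.pi * I * qval G x) * cexp (Real.pi * I * qval G y) *
        cexp (2 * Real.pi * I * dualForm G x y) := by
  rw [hG.qval_add, ← Complex.exp_add, ← Complex.exp_add]
  push_cast
  ring_nf

lemma discChar_mk (hG : IsEvenLattice G) (x : ι → ℤ) :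
    discChar G (Submodule.Quotient.mk x) = cexp (Real.pi * I * qval G x) := by
  set y := Function.surjInv (Submodule.Quotient.mk_surjective _)
    (Submodule.Quotient.mk x : Coker G) with hy
  obtain ⟨l, hl⟩ := (Submodule.Quotient.eq _).1
    (Function.surjInv_eq (Submodule.Quotient.mk_surjective _) (Submodule.Quotient.mk x : Coker G))
  have hyl : y = x + G *ᵥ l := by
    rw [← toLin'_apply, hl]
    abel
  have hint : cexp (2 * Real.pi * I * dualForm G x (G *ᵥ l)) = 1 :=
    exp_eq_one_iff.2 ⟨x ⬝ᵥ l, by rw [dualForm_mulVec_right hG.det_ne_zero]; push_cast; ring⟩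
  rw [discChar, ← hy, hyl, hG.cexp_qval_add, hG.cexp_qval_mulVec, hint, mul_one, mul_one]

lemma conj (hG : IsEvenLattice G) (hP : P.det ≠ 0) : IsEvenLattice (Pᵀ * G * P) where
  isSymm := by
    rw [IsSymm, transpose_mul, transpose_mul, transpose_transpose, hG.isSymm, mul_assoc]
  even x := by
    rw [BF, dotProduct_transpose_mul_mul_mulVec]
    exact hG.even (P *ᵥ x)
  det_ne_zero := by
    rw [det_mul, det_mul, det_transpose]
    exact mul_ne_zero (mul_ne_zero hP hG.det_ne_zero) hP

lemma discChar_conj_mk_add (hG : IsEvenLattice G) (hP : P.det ≠ 0) (u l : ι → ℤ) :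
    discChar (Pᵀ * G * P) (Submodule.Quotient.mk u + latticeToCoker G P l) =
      discChar (Pᵀ * G * P) (Submodule.Quotient.mk u) *
        cexp (2 * Real.pi * I * dualForm (Pᵀ * G * P) u (Pᵀ *ᵥ (G *ᵥ l))) := by
  have hD := hG.conj hP
  rw [latticeToCoker_apply, ← Submodule.Quotient.mk_add, hD.discChar_mk, hD.discChar_mk,
    hD.cexp_qval_add, qval_eq_dualForm (Pᵀ *ᵥ _), dualForm_transpose_mulVec hP,
    ← qval_eq_dualForm, hG.cexp_qval_mulVec, mul_one]

lemma discChar_conj_add_eq_iff (hG : IsEvenLattice G) (hP : P.det ≠ 0)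
    (c : Coker (Pᵀ * G * P)) :
    (∀ l, discChar (Pᵀ * G * P) (c + latticeToCoker G P l) = discChar (Pᵀ * G * P) c) ↔
      ∃ a, cokerTranspose G P a = c := by
  obtain ⟨u, rfl⟩ := Submodule.Quotient.mk_surjective _ c
  refine ⟨fun h => ?_, ?_⟩
  · obtain ⟨x, rfl⟩ := eq_transpose_mulVec_of_dualForm hG.det_ne_zero hP (u := u) fun l => by
      have hl := h l
      rw [hG.discChar_conj_mk_add hP, mul_eq_left₀ (by exact exp_ne_zero _)] at hl
      obtain ⟨n, hn⟩ := exp_eq_one_iff.1 hl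
      have hnC := mul_left_cancel₀ two_pi_I_ne_zero (hn.trans (mul_comm _ _))
      exact ⟨n, mod_cast hnC⟩
    exact ⟨_, cokerTranspose_mk x⟩
  · rintro ⟨a, ha⟩ l
    obtain ⟨x, rfl⟩ := Submodule.Quotient.mk_surjective _ a
    rw [← ha, cokerTranspose_mk, hG.discChar_conj_mk_add hP, dualForm_transpose_mulVec hP,
      dualForm_mulVec_right hG.det_ne_zero, exp_eq_one_iff.2 ⟨x ⬝ᵥ l, by push_cast; ring⟩, mul_one]

lemma discChar_conj_add_add (hG : IsEvenLattice G) (hP : P.det ≠ 0) (c : Coker (Pᵀ * G * P))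
    (l m : ι → ℤ) :
    discChar (Pᵀ * G * P) (c + latticeToCoker G P l + latticeToCoker G P m) *
        discChar (Pᵀ * G * P) c =
      discChar (Pᵀ * G * P) (c + latticeToCoker G P l) *
        discChar (Pᵀ * G * P) (c + latticeToCoker G P m) := by
  obtain ⟨u, rfl⟩ := Submodule.Quotient.mk_surjective _ c
  rw [add_assoc, ← map_add]
  simp only [hG.discChar_conj_mk_add hP]
  rw [mulVec_add, mulVec_add, map_add, Rat.cast_add, mul_add, Complex.exp_add]
  ring

lemma discChar_cokerTranspose (hG : IsEvenLattice G) (hP : P.det ≠ 0) (a : Coker (G * P)) :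
    discChar (Pᵀ * G * P) (cokerTranspose G P a) = discChar G (cokerProj G P a) := by
  obtain ⟨x, rfl⟩ := Submodule.Quotient.mk_surjective _ a
  rw [cokerTranspose_mk, cokerProj_mk, (hG.conj hP).discChar_mk, hG.discChar_mk, qval_eq_dualForm,
    dualForm_transpose_mulVec hP, qval_eq_dualForm]

lemma sum_discChar_conj (hG : IsEvenLattice G) (hP : P.det ≠ 0) [Fintype (Coker (G * P))]
    [Fintype (Coker (Pᵀ * G * P))] :
    ∑ c, discChar (Pᵀ * G * P) c = ∑ a, discChar G (cokerProj G P a) := by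
  classical
  have hmul : ∀ c, ∀ h ∈ (latticeToCoker G P).range, ∀ k ∈ (latticeToCoker G P).range,
      discChar (Pᵀ * G * P) (c + h + k) * discChar (Pᵀ * G * P) c =
        discChar (Pᵀ * G * P) (c + h) * discChar (Pᵀ * G * P) (c + k) := by
    rintro c _ ⟨l, rfl⟩ _ ⟨m, rfl⟩
    exact hG.discChar_conj_add_add hP c l m
  have hfilter : (Finset.univ.filter fun c => ∀ h ∈ (latticeToCoker G P).range,
      discChar (Pᵀ * G * P) (c + h) = discChar (Pᵀ * G * P) c) =
        Finset.univ.image (cokerTranspose G P) := by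
    ext c
    simp only [Finset.mem_filter_univ, Finset.mem_image, Finset.mem_univ, true_and,
      AddMonoidHom.mem_range, forall_exists_index, forall_apply_eq_imp_iff]
    exact hG.discChar_conj_add_eq_iff hP c
  rw [sum_eq_sum_filter_add_eq _ hmul, hfilter,
    Finset.sum_image (cokerTranspose_injective hP).injOn]
  simp only [hG.discChar_cokerTranspose hP]

theorem discGaussSum_conj (hG : IsEvenLattice G) (hP : P.det ≠ 0) :
    discGaussSum (Pᵀ * G * P) = P.det.natAbs * discGaussSum G := by
  have hGP : (G * P).det ≠ 0 := by simp [det_mul, hP, hG.det_ne_zero]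
  have hcard : (Nat.card (Coker G) : ℂ) ≠ 0 := by
    simpa [card_coker hG.det_ne_zero] using hG.det_ne_zero
  have := finite_coker hGP
  have := finite_coker hG.det_ne_zero
  have := finite_coker (hG.conj hP).det_ne_zero
  have := Fintype.ofFinite (Coker (G * P))
  have := Fintype.ofFinite (Coker G)
  have := Fintype.ofFinite (Coker (Pᵀ * G * P))
  rw [discGaussSum, discGaussSum, finsum_eq_sum_of_fintype, finsum_eq_sum_of_fintype,
    hG.sum_discChar_conj hP]
  refine mul_left_cancel₀ hcard ?_
  rw [card_mul_sum_comp_of_surjective cokerProj_surjective (discChar G), card_coker hGP,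
    card_coker hG.det_ne_zero, det_mul, Int.natAbs_mul]
  push_cast
  ring

end IsEvenLattice

end DiscriminantGaussSum

section Signature

variable {ι : Type*} [Fintype ι] [DecidableEq ι]

lemma exists_transpose_mul_mul_eq_diagonal {K : Type*} [Field K] [Invertible (2 : K)]
    {A : Matrix ι ι K} (hA : A.IsSymm) :
    ∃ (P : Matrix ι ι K) (w : ι → K), IsUnit P.det ∧ Pᵀ * A * P = diagonal w := by
  have hB : (toBilin' A).IsSymm := ⟨fun x y => by
    rw [toBilin'_apply', toBilin'_apply', dotProduct_mulVec, ← mulVec_transpose, hA,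
      dotProduct_comm]⟩
  obtain ⟨v, hv⟩ := LinearMap.BilinForm.exists_orthogonal_basis
    (LinearMap.BilinForm.isSymm_iff.1 hB)
  let c := v.reindex (Fintype.equivOfCardEq (by simp) : Fin (Module.finrank K (ι → K)) ≃ ι)
  have hdiag : (LinearMap.BilinForm.toMatrix c (toBilin' A)).IsDiag := fun i j hij => by
    simpa [c, LinearMap.BilinForm.toMatrix_apply] using hv fun h => hij (Equiv.injective _ h)
  refine ⟨(Pi.basisFun K ι).toMatrix c,
    (LinearMap.BilinForm.toMatrix c (toBilin' A)).diag, (Pi.basisFun K ι).isUnit_det c, ?_⟩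
  rw [hdiag.diagonal_diag, ← LinearMap.BilinForm.toMatrix_mul_basis_toMatrix (Pi.basisFun K ι) c,
    LinearMap.BilinForm.toMatrix_basisFun, LinearMap.BilinForm.toMatrix'_toBilin']

lemma exists_int_transpose_mul_mul_eq_diagonal {G : Matrix ι ι ℤ} (hG : G.IsSymm) :
    ∃ (P : Matrix ι ι ℤ) (d : ι → ℤ), P.det ≠ 0 ∧ Pᵀ * G * P = diagonal d := by
  have : Invertible (2 : ℚ) := invertibleOfNonzero two_ne_zero
  obtain ⟨Q, w, hQ, hw⟩ :=
    exists_transpose_mul_mul_eq_diagonal (hG.map (Int.cast : ℤ → ℚ))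
  have hnum : Q.num.map (Int.cast : ℤ → ℚ) = (Q.den : ℚ) • Q := by
    rw [← inv_smul_eq_iff₀ (mod_cast Q.den_ne_zero)]
    exact Q.inv_denom_smul_num
  have hdet : Q.num.det ≠ 0 := fun h => by
    have hcast := (Int.castRingHom ℚ).map_det Q.num
    rw [h, map_zero, RingHom.mapMatrix_apply, Int.coe_castRingHom, hnum, det_smul] at hcast
    simp [Q.den_ne_zero, hQ.ne_zero] at hcast
  have hcast : (Q.numᵀ * G * Q.num).map (Int.cast : ℤ → ℚ) = (Q.den : ℚ) ^ 2 • diagonal w := by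
    rw [map_intCast_transpose_mul_mul, hnum, ← hw, transpose_smul, smul_mul, smul_mul,
      Matrix.mul_smul, smul_smul, pow_two]
  have hdiag : (Q.numᵀ * G * Q.num).IsDiag := fun i j hij => by
    have hij' := congrFun₂ hcast i j
    simpa [hij] using hij'
  exact ⟨Q.num, _, hdet, hdiag.diagonal_diag.symm⟩

lemma toQuadraticForm'_equivalent_weightedSumSquares {A P : Matrix ι ι ℝ} {w : ι → ℝ}
    (hP : IsUnit P.det) (h : Pᵀ * A * P = diagonal w) :
    A.toQuadraticForm'.Equivalent (QuadraticMap.weightedSumSquares ℝ w) := by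
  have : Invertible P := P.invertibleOfIsUnitDet hP
  refine QuadraticMap.Equivalent.symm ⟨⟨P.toLinearEquiv' this, fun x => ?_⟩⟩
  calc A.toQuadraticForm' (P *ᵥ x) = (P *ᵥ x) ⬝ᵥ A *ᵥ (P *ᵥ x) := toLinearMap₂'_apply' A _ _
    _ = x ⬝ᵥ diagonal w *ᵥ x := by
      rw [← h, dotProduct_transpose_mul_mul_mulVec]
    _ = QuadraticMap.weightedSumSquares ℝ w x := by
      rw [QuadraticMap.weightedSumSquares_apply]
      simp only [dotProduct, mulVec_diagonal, smul_eq_mul]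
      exact Finset.sum_congr rfl fun i _ => by ring

lemma sum_sign_eq_sigPos_sub_sigNeg {A P : Matrix ι ι ℝ} {w : ι → ℝ} (hP : IsUnit P.det)
    (h : Pᵀ * A * P = diagonal w) :
    ∑ i, (SignType.sign (w i) : ℤ) =
      sigPos A.toQuadraticForm' - sigNeg A.toQuadraticForm' := by
  have hw := toQuadraticForm'_equivalent_weightedSumSquares hP h
  have hsign (i : ι) : (SignType.sign (w i) : ℤ) =
      (if 0 < w i then 1 else 0) - if w i < 0 then 1 else 0 := by
    rcases lt_trichotomy (w i) 0 with hi | hi | hi <;> simp [hi, hi.not_gt]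
  rw [QuadraticForm.sigPos_of_equiv_weightedSumSquares hw,
    QuadraticForm.sigNeg_of_equiv_weightedSumSquares hw]
  simp only [hsign, Finset.sum_sub_distrib, Finset.sum_boole, Set.ncard_eq_toFinset_card']
  simp

lemma SigIs.sum_sign_eq {G P : Matrix ι ι ℤ} {a b : ℕ} (hs : SigIs G a b) {d : ι → ℤ}
    (hP : P.det ≠ 0) (h : Pᵀ * G * P = diagonal d) : ∑ i, (d i).sign = a - b := by
  obtain ⟨w, hw, ha, hb, Q, hQ, hQG⟩ := hs
  have hcast : (P.map (Int.cast : ℤ → ℝ))ᵀ * G.map Int.cast * P.map Int.cast =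
      diagonal fun i => (d i : ℝ) := by
    rw [← map_intCast_transpose_mul_mul, h, diagonal_map Int.cast_zero]
  have hsign (i : ι) : (SignType.sign (w i) : ℤ) =
      (if w i = 1 then 1 else 0) - if w i = -1 then 1 else 0 := by
    rcases hw i with hi | hi <;> simp [hi] <;> norm_num
  calc ∑ i, (d i).sign = ∑ i, (SignType.sign (d i : ℝ) : ℤ) := by
        simp only [Int.sign_eq_sign, sign_intCast]
    _ = ∑ i, (SignType.sign (w i) : ℤ) := by
        rw [sum_sign_eq_sigPos_sub_sigNeg (isUnit_det_map_intCast hP ℝ) hcast,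
          sum_sign_eq_sigPos_sub_sigNeg hQ hQG]
    _ = a - b := by
        rw [← ha, ← hb, Nat.card_eq_fintype_card, Nat.card_eq_fintype_card, Fintype.card_subtype,
          Fintype.card_subtype]
        simp only [hsign, Finset.sum_sub_distrib, Finset.sum_boole]

end Signature

section Milgram

open Complex

variable {ι : Type*} [Fintype ι] [DecidableEq ι] {G : Matrix ι ι ℤ}

lemma qval_diagonal {d : ι → ℤ} (hd : ∀ i, d i ≠ 0) (x : ι → ℤ) :
    qval (diagonal d) x = ∑ i, (x i ^ 2 / d i : ℚ) := by
  have hinv : ((diagonal d).map (Int.cast : ℤ → ℚ))⁻¹ = diagonal fun i => (d i : ℚ)⁻¹ := by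
    refine inv_eq_right_inv ?_
    rw [diagonal_map Int.cast_zero, diagonal_mul_diagonal, ← diagonal_one]
    exact congrArg diagonal (funext fun i => mul_inv_cancel₀ (Int.cast_ne_zero.2 (hd i)))
  rw [qval, hinv]
  simp only [dotProduct, mulVec_diagonal]
  exact Finset.sum_congr rfl fun i _ => by ring

lemma bijective_mk_coker_diagonal {d : ι → ℤ} (hd : ∀ i, d i ≠ 0) :
    Function.Bijective fun r : (i : ι) → Fin (d i).natAbs =>
      (Submodule.Quotient.mk fun i => (r i : ℤ) : Coker (diagonal d)) := by
  have hdet : (diagonal d).det ≠ 0 := by simpa [Finset.prod_eq_zero_iff] using hd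
  have := finite_coker hdet
  rw [Nat.bijective_iff_injective_and_card]
  refine ⟨fun r s hrs => ?_, ?_⟩
  · obtain ⟨l, hl⟩ := (Submodule.Quotient.eq _).1 hrs
    ext i
    have hi : d i * l i = r i - s i := by simpa [mulVec_diagonal] using congrFun hl i
    have hlt : (r i - s i : ℤ).natAbs < (d i).natAbs := by omega
    have := Int.eq_zero_of_dvd_of_natAbs_lt_natAbs ⟨l i, hi.symm⟩ hlt
    omega
  · rw [card_coker hdet, det_diagonal, Nat.card_pi]
    simp only [Nat.card_eq_fintype_card, Fintype.card_fin]
    exact (map_prod Int.natAbsHom d _).symm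

theorem discGaussSum_diagonal {d : ι → ℤ} (hd : IsEvenLattice (diagonal d)) :
    discGaussSum (diagonal d) =
      √|((diagonal d).det : ℝ)| * cexp (Real.pi / 4 * I * (∑ i, (d i).sign : ℤ)) := by
  have hd0 (i : ι) : d i ≠ 0 := by
    have := hd.det_ne_zero
    rw [det_diagonal] at this
    exact Finset.prod_ne_zero_iff.1 this i (Finset.mem_univ i)
  have hd2 (i : ι) : 2 ∣ d i := by simpa [BF] using hd.even (Pi.single i 1)
  have := finite_coker hd.det_ne_zero
  have := Fintype.ofFinite (Coker (diagonal d))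
  rw [discGaussSum, finsum_eq_sum_of_fintype,
    ← (bijective_mk_coker_diagonal hd0).sum_comp (discChar (diagonal d))]
  simp only [hd.discChar_mk, qval_diagonal hd0]
  calc _ = ∑ r : (i : ι) → Fin (d i).natAbs, ∏ i, cexp (Real.pi * I * ((r i : ℂ) ^ 2 / d i)) := by
        refine Finset.sum_congr rfl fun r _ => ?_
        rw [← Complex.exp_sum, ← Finset.mul_sum]
        push_cast
        rfl
    _ = ∏ i, √|(d i : ℝ)| * cexp (Real.pi / 4 * I * (d i).sign) := by
        rw [← Fintype.prod_sum fun i (t : Fin (d i).natAbs) =>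
          cexp (Real.pi * I * ((t : ℂ) ^ 2 / d i))]
        exact Finset.prod_congr rfl fun i _ => sum_exp_pi_mul_I_mul_sq_div_int (hd0 i) (hd2 i)
    _ = _ := by
        rw [Finset.prod_mul_distrib, ← Complex.exp_sum, ← Finset.mul_sum, det_diagonal]
        push_cast
        rw [Finset.abs_prod, Real.sqrt_prod _ fun i _ => abs_nonneg _]
        push_cast
        rfl

theorem IsEvenLattice.discGaussSum_eq (hG : IsEvenLattice G) {a b : ℕ} (hs : SigIs G a b) :
    discGaussSum G = √|(G.det : ℝ)| * cexp (Real.pi / 4 * I * (a - b)) := by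
  obtain ⟨P, d, hP, hd⟩ := exists_int_transpose_mul_mul_eq_diagonal hG.isSymm
  have hsum := discGaussSum_diagonal (hd ▸ hG.conj hP)
  rw [hs.sum_sign_eq hP hd, ← hd, hG.discGaussSum_conj hP] at hsum
  have hsqrt : √|((Pᵀ * G * P).det : ℝ)| = P.det.natAbs * √|(G.det : ℝ)| := by
    rw [det_mul, det_mul, det_transpose, mul_right_comm, ← pow_two, Int.cast_mul, Int.cast_pow,
      abs_mul, abs_pow, Real.sqrt_mul (by positivity), Real.sqrt_sq (abs_nonneg _),
      Nat.cast_natAbs, Int.cast_abs]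
  refine mul_left_cancel₀ (by simpa using hP : (P.det.natAbs : ℂ) ≠ 0) (hsum.trans ?_)
  rw [hsqrt]
  push_cast
  ring

end Milgram

section QuadraticCharacter

variable {F : Type*} [Field F] [Fintype F] [DecidableEq F]

/-- The quadratic character of a finite field, with complex values. -/
noncomputable def complexQuadraticChar (F : Type*) [Field F] [Fintype F] [DecidableEq F] :
    MulChar F ℂ :=
  (quadraticChar F).ringHomComp (Int.castRingHom ℂ)

lemma complexQuadraticChar_apply (a : F) :
    complexQuadraticChar F a = (quadraticChar F a : ℂ) := rfl

lemma gaussSum_mulShift_complexQuadraticChar (ψ : AddChar F ℂ) {m : F} (hm : m ≠ 0) :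
    gaussSum (complexQuadraticChar F) (ψ.mulShift m) =
      complexQuadraticChar F m * gaussSum (complexQuadraticChar F) ψ := by
  have hsq : complexQuadraticChar F m * complexQuadraticChar F m = 1 := by
    rw [complexQuadraticChar_apply, ← pow_two]
    exact_mod_cast quadraticChar_sq_one hm
  rw [← gaussSum_mulShift _ ψ (Units.mk0 m hm), Units.val_mk0, ← mul_assoc, hsq, one_mul]

lemma sum_mul_sq_eq_gaussSum (hF : ringChar F ≠ 2) {ψ : AddChar F ℂ} (hψ : ψ.IsPrimitive) {m : F}
    (hm : m ≠ 0) :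
    ∑ k, ψ (m * k ^ 2) = complexQuadraticChar F m * gaussSum (complexQuadraticChar F) ψ := by
  have hcard (a : F) : ((Finset.univ.filter fun k : F => k ^ 2 = a).card : ℂ) =
      complexQuadraticChar F a + 1 := by
    have := quadraticChar_card_sqrts hF a
    rw [complexQuadraticChar_apply]
    exact_mod_cast (by simpa using this)
  calc ∑ k, ψ (m * k ^ 2) = ∑ a, (complexQuadraticChar F a + 1) * ψ (m * a) := by
        rw [← Finset.sum_fiberwise Finset.univ (· ^ 2)]
        refine Finset.sum_congr rfl fun a _ => ?_
        rw [Finset.sum_congr rfl fun k hk => by rw [(Finset.mem_filter.1 hk).2], Finset.sum_const,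
          nsmul_eq_mul, hcard]
    _ = gaussSum (complexQuadraticChar F) (ψ.mulShift m) + ∑ a, ψ.mulShift m a := by
        simp only [gaussSum, AddChar.mulShift_apply, add_mul, one_mul, Finset.sum_add_distrib]
    _ = _ := by
        rw [AddChar.sum_eq_zero_of_ne_one (hψ hm), add_zero,
          gaussSum_mulShift_complexQuadraticChar ψ hm]

lemma sum_mul_sq_mul_sum_mul_sq (hF : ringChar F ≠ 2) {ψ : AddChar F ℂ} (hψ : ψ.IsPrimitive)
    {m n : F} (hm : m ≠ 0) (hn : n ≠ 0) :
    (∑ k, ψ (m * k ^ 2)) * ∑ k, ψ (n * k ^ 2) = quadraticChar F (-(m * n)) * Fintype.card F := by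
  have hone : complexQuadraticChar F ≠ 1 :=
    (MulChar.ringHomComp_ne_one_iff (Int.cast_injective (α := ℂ))).2 (quadraticChar_ne_one hF)
  have hsq := gaussSum_sq hone ((quadraticChar_isQuadratic F).comp _) hψ
  rw [sum_mul_sq_eq_gaussSum hF hψ hm, sum_mul_sq_eq_gaussSum hF hψ hn, mul_mul_mul_comm,
    ← pow_two, hsq, ← complexQuadraticChar_apply, ← neg_one_mul (m * n), map_mul, map_mul]
  ring

end QuadraticCharacter

section PrimeDiscriminant

open Complex

variable {ι κ : Type*} [Fintype ι] [DecidableEq ι] [Fintype κ] [DecidableEq κ]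
  {G : Matrix ι ι ℤ} {H : Matrix κ κ ℤ} {p : ℕ}

lemma IsEvenLattice.qIsoNeg_of_discChar_mul_eq_one (hG : IsEvenLattice G) (hH : IsEvenLattice H)
    (e : Coker G ≃+ Coker H) (h : ∀ c, discChar G c * discChar H (e c) = 1) : QIsoNeg G H := by
  refine ⟨e, fun x => ?_⟩
  obtain ⟨y, hy⟩ := Submodule.Quotient.mk_surjective _ (e (Submodule.Quotient.mk x))
  refine ⟨y, hy.symm, ?_⟩
  have hxy := h (Submodule.Quotient.mk x)
  rw [← hy, hG.discChar_mk, hH.discChar_mk, ← Complex.exp_add, exp_eq_one_iff] at hxy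
  obtain ⟨n, hn⟩ := hxy
  have hpi : (Real.pi * I : ℂ) ≠ 0 := mul_ne_zero (mod_cast Real.pi_ne_zero) I_ne_zero
  have hnC : ((qval G x : ℂ) + qval H y) = n * 2 :=
    mul_left_cancel₀ hpi (by linear_combination hn)
  exact AddSubgroup.mem_zmultiples_iff.2 ⟨n, by rw [zsmul_eq_mul]; exact_mod_cast hnC.symm⟩

lemma IsEvenLattice.exists_mul_qval_eq (hG : IsEvenLattice G) (hp : Odd p) {w : ι → ℤ}
    (hw : p • (Submodule.Quotient.mk w : Coker G) = 0) : ∃ m : ℤ, p * qval G w = 2 * m := by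
  obtain ⟨y, hy⟩ := (Submodule.Quotient.mk_eq_zero _ (x := p • w)).1 hw
  have hyw : G *ᵥ y = (p : ℤ) • w := by simpa using hy
  have heven : 2 ∣ p * (w ⬝ᵥ y) := by
    have := hG.even y
    rwa [BF, hyw, dotProduct_smul, dotProduct_comm, smul_eq_mul] at this
  obtain ⟨m, hm⟩ := (Int.prime_two.dvd_or_dvd heven).resolve_left (by
    have := hp.not_two_dvd_nat
    omega)
  refine ⟨m, ?_⟩
  have hval := dualForm_mulVec_right hG.det_ne_zero w y
  rw [hyw, map_smul, hm, zsmul_eq_mul, ← qval_eq_dualForm] at hval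
  exact_mod_cast hval

lemma qval_zsmul (n : ℤ) (w : ι → ℤ) : qval G (n • w) = n ^ 2 * qval G w := by
  rw [qval_eq_dualForm, map_smul, map_smul, LinearMap.smul_apply, smul_smul, zsmul_eq_mul,
    ← qval_eq_dualForm, Int.cast_mul, pow_two]

lemma IsEvenLattice.exists_addEquiv_discChar_eq [Fact p.Prime] (hG : IsEvenLattice G)
    (hp : p ≠ 2) (hdet : G.det.natAbs = p) :
    ∃ (e : ZMod p ≃+ Coker G) (m : ZMod p),
      ∀ k, discChar G (e k) = ZMod.stdAddChar (m * k ^ 2) := by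
  have hprime : p.Prime := Fact.out
  have hcard : Nat.card (Coker G) = p := (card_coker hG.det_ne_zero).trans hdet
  have := isAddCyclic_of_prime_card hcard
  let e : ZMod p ≃+ Coker G :=
    (ZMod.ringEquivCongr hcard.symm).toAddEquiv.trans (zmodAddCyclicAddEquiv inferInstance)
  obtain ⟨w, hw⟩ := Submodule.Quotient.mk_surjective _ (e 1)
  obtain ⟨m, hm⟩ := hG.exists_mul_qval_eq (hprime.odd_of_ne_two hp) (w := w) (by
    rw [hw, ← map_nsmul]
    simp)
  refine ⟨e, m, fun k => ?_⟩
  obtain ⟨n, rfl⟩ := ZMod.intCast_surjective k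
  have hen : e n = Submodule.Quotient.mk (n • w) := by
    rw [Submodule.Quotient.mk_smul, hw, ← map_zsmul, zsmul_one]
  have hp0 : (p : ℂ) ≠ 0 := mod_cast hprime.ne_zero
  have hmC : (p * qval G w : ℂ) = 2 * m := mod_cast hm
  have hmn : (m * n ^ 2 : ZMod p) = ((m * n ^ 2 : ℤ) : ZMod p) := by push_cast; rfl
  rw [hen, hG.discChar_mk, qval_zsmul, hmn, ZMod.stdAddChar_coe]
  congr 1
  field_simp
  push_cast
  linear_combination n ^ 2 * hmC

lemma IsEvenLattice.qIsoNeg_of_discChar_eq [Fact p.Prime] (hG : IsEvenLattice G)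
    (hH : IsEvenLattice H) {e : ZMod p ≃+ Coker G} {e' : ZMod p ≃+ Coker H} {m n : ZMod p}
    (he : ∀ k, discChar G (e k) = ZMod.stdAddChar (m * k ^ 2))
    (he' : ∀ k, discChar H (e' k) = ZMod.stdAddChar (n * k ^ 2))
    (hm : m ≠ 0) (hn : n ≠ 0) (hmn : IsSquare (-(m * n))) : QIsoNeg G H := by
  obtain ⟨s, hs⟩ := hmn
  have hs0 : s ≠ 0 := by
    rintro rfl
    simp [hm, hn] at hs
  let u : (ZMod p)ˣ := Units.mk0 (s / n) (div_ne_zero hs0 hn)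
  refine hG.qIsoNeg_of_discChar_mul_eq_one hH
    ((e.symm.trans (DistribMulAction.toAddEquiv _ u)).trans e') fun c => ?_
  obtain ⟨k, rfl⟩ := e.surjective c
  have hu : m * k ^ 2 + n * (s / n * k) ^ 2 = 0 := by
    field_simp
    linear_combination -k ^ 2 * hs
  rw [AddEquiv.trans_apply, AddEquiv.trans_apply, AddEquiv.symm_apply_apply, he, he',
    ← AddChar.map_add_eq_mul]
  change ZMod.stdAddChar (m * k ^ 2 + n * (s / n * k) ^ 2) = 1
  rw [hu, AddChar.map_zero_eq_one]

lemma discGaussSum_eq_sum_stdAddChar [Fact p.Prime] {e : ZMod p ≃+ Coker G} {m : ZMod p}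
    (he : ∀ k, discChar G (e k) = ZMod.stdAddChar (m * k ^ 2)) :
    discGaussSum G = ∑ k : ZMod p, ZMod.stdAddChar (m * k ^ 2) := by
  rw [discGaussSum, ← finsum_comp_equiv e.toEquiv, finsum_eq_sum_of_fintype]
  exact Finset.sum_congr rfl fun k _ => he k

lemma IsEvenLattice.ne_zero_of_discChar_eq [Fact p.Prime] (hG : IsEvenLattice G) {a b : ℕ}
    (hs : SigIs G a b) (hdet : G.det.natAbs = p) {e : ZMod p ≃+ Coker G} {m : ZMod p}
    (he : ∀ k, discChar G (e k) = ZMod.stdAddChar (m * k ^ 2)) : m ≠ 0 := by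
  rintro rfl
  have hp : 1 < p := (Fact.out : p.Prime).one_lt
  have hsum := congrArg norm
    ((discGaussSum_eq_sum_stdAddChar he).symm.trans (hG.discGaussSum_eq hs))
  have hexp : ‖cexp (Real.pi / 4 * I * (a - b))‖ = 1 := by
    have := norm_exp_ofReal_mul_I (Real.pi / 4 * (a - b))
    push_cast at this
    rwa [mul_right_comm]
  have hdetR : |(G.det : ℝ)| = p := by rw [← hdet, Nat.cast_natAbs, Int.cast_abs]
  have hsqrt : (p : ℝ) = √p := by
    simpa [hexp, hdetR, ZMod.card, abs_of_nonneg (Real.sqrt_nonneg _)] using hsum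
  have hpR : (1 : ℝ) < p := mod_cast hp
  nlinarith [Real.sq_sqrt (Nat.cast_nonneg (α := ℝ) p)]

lemma IsEvenLattice.discGaussSum_mul_discGaussSum (hG : IsEvenLattice G) (hH : IsEvenLattice H)
    {a b c d : ℕ} (hsG : SigIs G a b) (hsH : SigIs H c d) (hsig : (8 : ℤ) ∣ (a - b) + (c - d))
    (hdG : G.det.natAbs = p) (hdH : H.det.natAbs = p) :
    discGaussSum G * discGaussSum H = p := by
  obtain ⟨j, hj⟩ := hsig
  have hjC : ((a : ℂ) - b) + (c - d) = 8 * j := mod_cast hj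
  have hexp : cexp (Real.pi / 4 * I * (a - b)) * cexp (Real.pi / 4 * I * (c - d)) = 1 := by
    rw [← Complex.exp_add, exp_eq_one_iff]
    exact ⟨j, by linear_combination Real.pi / 4 * I * hjC⟩
  have hdetR {n : ℤ} (h : n.natAbs = p) : |(n : ℝ)| = p := by
    rw [← h, Nat.cast_natAbs, Int.cast_abs]
  rw [hG.discGaussSum_eq hsG, hH.discGaussSum_eq hsH, mul_mul_mul_comm, hexp, hdetR hdG,
    hdetR hdH, mul_one, ← ofReal_mul, Real.mul_self_sqrt (Nat.cast_nonneg p), ofReal_natCast]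

theorem IsEvenLattice.qIsoNeg_of_natAbs_det_eq_prime [Fact p.Prime] (hp : p ≠ 2)
    (hG : IsEvenLattice G) (hH : IsEvenLattice H) {a b c d : ℕ} (hsG : SigIs G a b)
    (hsH : SigIs H c d) (hsig : (8 : ℤ) ∣ (a - b) + (c - d)) (hdG : G.det.natAbs = p)
    (hdH : H.det.natAbs = p) : QIsoNeg G H := by
  obtain ⟨e, m, he⟩ := hG.exists_addEquiv_discChar_eq hp hdG
  obtain ⟨e', n, he'⟩ := hH.exists_addEquiv_discChar_eq hp hdH
  have hm := hG.ne_zero_of_discChar_eq hsG hdG he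
  have hn := hH.ne_zero_of_discChar_eq hsH hdH he'
  have hprod := hG.discGaussSum_mul_discGaussSum hH hsG hsH hsig hdG hdH
  rw [discGaussSum_eq_sum_stdAddChar he, discGaussSum_eq_sum_stdAddChar he',
    sum_mul_sq_mul_sum_mul_sq ((ZMod.ringChar_zmod_n p).trans_ne hp)
      (ZMod.isPrimitive_stdAddChar p) hm hn, ZMod.card] at hprod
  have hp0 : (p : ℂ) ≠ 0 := mod_cast (Fact.out : p.Prime).ne_zero
  have hcharC := mul_right_cancel₀ hp0 (hprod.trans (one_mul _).symm)
  have hchar : quadraticChar (ZMod p) (-(m * n)) = 1 := mod_cast hcharC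
  have hmn : -(m * n) ≠ 0 := neg_ne_zero.2 (mul_ne_zero hm hn)
  exact hG.qIsoNeg_of_discChar_eq hH he he' hm hn
    ((quadraticChar_one_iff_isSquare hmn).1 hchar)

end PrimeDiscriminant

section OrthogonalSum

lemma natCard_subtype_sumElim {α β γ : Type*} [Finite α] [Finite β] (f : α → γ) (g : β → γ)
    (c : γ) : Nat.card {i // Sum.elim f g i = c} =
      Nat.card {i // f i = c} + Nat.card {j // g j = c} := by
  rw [Nat.card_congr (Equiv.subtypeSum), Nat.card_sum]
  rfl

variable {ι κ : Type*} [Fintype ι] [Fintype κ] {G : Matrix ι ι ℤ} {H : Matrix κ κ ℤ}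

lemma BF_dsum (x y : ι ⊕ κ → ℤ) :
    BF (dsum G H) x y =
      BF G (x ∘ Sum.inl) (y ∘ Sum.inl) + BF H (x ∘ Sum.inr) (y ∘ Sum.inr) := by
  simp only [BF, dsum, fromBlocks_mulVec, zero_mulVec, add_zero, zero_add]
  conv_lhs => rw [← Sum.elim_comp_inl_inr x]
  rw [sumElim_dotProduct_sumElim]

variable [DecidableEq ι] [DecidableEq κ]

lemma det_dsum : (dsum G H).det = G.det * H.det :=
  det_fromBlocks_zero₂₁ G 0 H

lemma IsEvenLattice.dsum (hG : IsEvenLattice G) (hH : IsEvenLattice H) :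
    IsEvenLattice (dsum G H) where
  isSymm := hG.isSymm.fromBlocks (transpose_zero) hH.isSymm
  even x := by
    rw [BF_dsum]
    exact dvd_add (hG.even _) (hH.even _)
  det_ne_zero := by
    rw [det_dsum]
    exact mul_ne_zero hG.det_ne_zero hH.det_ne_zero

lemma SigIs.dsum {a b a' b' : ℕ} (hG : SigIs G a b) (hH : SigIs H a' b') :
    SigIs (dsum G H) (a + a') (b + b') := by
  obtain ⟨d, hd, rfl, rfl, P, hP, hPG⟩ := hG
  obtain ⟨d', hd', rfl, rfl, Q, hQ, hQH⟩ := hH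
  refine ⟨Sum.elim d d', Sum.rec hd hd', natCard_subtype_sumElim _ _ _,
    natCard_subtype_sumElim _ _ _, fromBlocks P 0 0 Q, ?_, ?_⟩
  · rw [det_fromBlocks_zero₂₁]
    exact hP.mul hQ
  · rw [_root_.dsum, fromBlocks_map, fromBlocks_transpose, fromBlocks_multiply, fromBlocks_multiply,
      ← fromBlocks_diagonal, ← hPG, ← hQH]
    simp

end OrthogonalSum

section HyperbolicPlane

lemma det_UMat : UMat.det = -1 := by
  simp [UMat, det_fin_two]

lemma isEvenLattice_UMat : IsEvenLattice UMat where
  isSymm := by decide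
  even x := ⟨x 0 * x 1, by simp [BF, UMat, mulVec, dotProduct, Fin.sum_univ_two]; ring⟩
  det_ne_zero := by simp [det_UMat]

lemma sigIs_UMat : SigIs UMat 1 1 := by
  refine ⟨![1, -1], fun i => ?_, ?_, ?_, !![1, 1; 1 / 2, -(1 / 2)], ?_, ?_⟩
  · fin_cases i <;> simp
  · rw [Nat.card_eq_fintype_card, Fintype.card_subtype, Finset.card_filter, Fin.sum_univ_two]
    norm_num
  · rw [Nat.card_eq_fintype_card, Fintype.card_subtype, Finset.card_filter, Fin.sum_univ_two]
    norm_num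
  · norm_num [det_fin_two]
  · ext i j
    fin_cases i <;> fin_cases j <;>
      norm_num [UMat, mul_apply, Fin.sum_univ_two]

end HyperbolicPlane

theorem stmt4_general {ι κ : Type*} [Fintype ι] [DecidableEq ι] [Fintype κ] [DecidableEq κ]
    {L : Matrix ι ι ℤ} {L' : Matrix κ κ ℤ} {p : ℕ} (hp : p.Prime) (hp2 : p ≠ 2)
    (hL : L.IsSymm) (hL' : L'.IsSymm) (heL : EvenGram L) (heL' : EvenGram L')
    {a b a' b' : ℕ} (hsL : SigIs L a b) (hsL' : SigIs L' a' b')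
    (hsig : (8 : ℤ) ∣ (a - b) + (a' - b'))
    (hdL : L.det.natAbs = p) (hdL' : L'.det.natAbs = p) :
    QIsoNeg (dsum UMat L') L ∧ (dsum UMat L').det = -L'.det := by
  have : Fact p.Prime := ⟨hp⟩
  have hdet : (dsum UMat L').det = -L'.det := by rw [det_dsum, det_UMat, neg_one_mul]
  have hLat : IsEvenLattice L := ⟨hL, heL, Int.natAbs_ne_zero.1 (hdL ▸ hp.ne_zero)⟩
  have hLat' : IsEvenLattice L' := ⟨hL', heL', Int.natAbs_ne_zero.1 (hdL' ▸ hp.ne_zero)⟩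
  refine ⟨(isEvenLattice_UMat.dsum hLat').qIsoNeg_of_natAbs_det_eq_prime hp2 hLat
    (sigIs_UMat.dsum hsL') hsL ?_ (by rw [hdet, Int.natAbs_neg, hdL']) hdL, hdet⟩
  push_cast
  rwa [add_sub_add_left_eq_sub, add_comm]

/-- If `L` and `L'` are even lattices of signature `(1,9)`, rank `10` and discriminant `-13`,
each primitively embedded in the K3 lattice, then the discriminant form of `U ⊕ L'` is
isomorphic to minus the discriminant form of `L`; consequently
`disc (U ⊕ L') = 13 = -disc L`. -/
theorem stmt4 (L L' : Matrix (Fin 10) (Fin 10) ℤ)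
    (hL : L.IsSymm) (hL' : L'.IsSymm) (heL : EvenGram L) (heL' : EvenGram L')
    (hsL : SigIs L 1 9) (hsL' : SigIs L' 1 9)
    (hdL : L.det = -13) (hdL' : L'.det = -13)
    (hembL : ∃ f : (Fin 10 → ℤ) →ₗ[ℤ] (K3Ix → ℤ), IsPrimEmb L K3Mat f)
    (hembL' : ∃ f : (Fin 10 → ℤ) →ₗ[ℤ] (K3Ix → ℤ), IsPrimEmb L' K3Mat f) :
    QIsoNeg (dsum UMat L') L ∧ (dsum UMat L').det = 13 ∧ (13 : ℤ) = -L.det := by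
  obtain ⟨hq, hd⟩ := stmt4_general (p := 13) (by norm_num) (by norm_num) hL hL' heL heL' hsL hsL'
    (by norm_num) (by simp [hdL]) (by simp [hdL'])
  exact ⟨hq, by rw [hd, hdL', neg_neg], by rw [hdL, neg_neg]⟩
end

section
/- Every positive-definite even unimodular lattice of rank 16 is isometric to E₈ ⊕ E₈ or to D₁₆⁺. -/
open Matrix

/-- Gram matrix of the even unimodular positive-definite lattice `D₁₆⁺`. -/
def D16Mat : Matrix (Fin 16) (Fin 16) ℤ :=
  !![4,0,0,0,0,0,0,0,0,0,0,0,0,0,0,1;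
     0,2,-1,0,0,0,0,0,0,0,0,0,0,0,0,0;
     0,-1,2,-1,0,0,0,0,0,0,0,0,0,0,0,0;
     0,0,-1,2,-1,0,0,0,0,0,0,0,0,0,0,0;
     0,0,0,-1,2,-1,0,0,0,0,0,0,0,0,0,0;
     0,0,0,0,-1,2,-1,0,0,0,0,0,0,0,0,0;
     0,0,0,0,0,-1,2,-1,0,0,0,0,0,0,0,0;
     0,0,0,0,0,0,-1,2,-1,0,0,0,0,0,0,0;
     0,0,0,0,0,0,0,-1,2,-1,0,0,0,0,0,0;
     0,0,0,0,0,0,0,0,-1,2,-1,0,0,0,0,0;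
     0,0,0,0,0,0,0,0,0,-1,2,-1,0,0,0,0;
     0,0,0,0,0,0,0,0,0,0,-1,2,-1,0,0,0;
     0,0,0,0,0,0,0,0,0,0,0,-1,2,-1,0,0;
     0,0,0,0,0,0,0,0,0,0,0,0,-1,2,-1,0;
     0,0,0,0,0,0,0,0,0,0,0,0,0,-1,2,-2;
     1,0,0,0,0,0,0,0,0,0,0,0,0,0,-2,4]

/-!
Let `B` be a positive definite even unimodular form of rank `16` and let `E` be the form of
`E₈ ⊕ E₈`. Minkowski's theorem, applied repeatedly to `B` and to orthogonal complements in it, finds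
enough vectors of small norm to show that `B` becomes isometric to `E` after adding the odd plane
`⟨1⟩ ⊕ ⟨-1⟩`. The even vectors of such a sum determine the form obtained by adding the hyperbolic
plane `U` instead, so `U ⊕ B` and `U ⊕ E` are isometric. Under such an isometry `B` becomes
`w^⊥ / w` for an isotropic vector `w` of `U ⊕ E`. Reflections in roots move `w` into Vinberg's
fundamental chamber, where the primitive isotropic vectors are the two cusps of its Coxeter diagram:
one of them gives `E₈ ⊕ E₈`, the other gives `D₁₆⁺`.
-/

section GeometryOfNumbers

open MeasureTheory Metric Module

variable {ι : Type*} [Fintype ι]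

/-- Nonnegativity passes from `ℤ` to `ℚ` by clearing denominators and from `ℚ` to `ℝ` by
density. -/
theorem posSemidef_map_intCast {G : Matrix ι ι ℤ} (hG : G.IsSymm)
    (hnonneg : ∀ x, 0 ≤ x ⬝ᵥ G *ᵥ x) : (G.map (Int.cast : ℤ → ℝ)).PosSemidef := by
  refine .of_dotProduct_mulVec_nonneg ?_ fun v => ?_
  · rw [IsHermitian, conjTranspose_eq_transpose_of_trivial, ← transpose_map, hG.eq]
  have hdense : DenseRange (fun (x : ι → ℚ) (i : ι) => (x i : ℝ)) :=
    DenseRange.piMap fun _ => Rat.denseRange_cast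
  rw [star_trivial]
  refine hdense.induction_on (p := fun v => 0 ≤ v ⬝ᵥ G.map (Int.cast : ℤ → ℝ) *ᵥ v) v
    (isClosed_le continuous_const (by fun_prop)) fun x => ?_
  obtain ⟨d, hd⟩ := IsLocalization.exist_integer_multiples_of_finite (nonZeroDivisors ℤ) x
  choose z hz using hd
  have hd0 : ((d : ℤ) : ℝ) ≠ 0 := Int.cast_ne_zero.mpr (nonZeroDivisors.ne_zero d.2)
  have hzx : (fun i => (z i : ℝ)) = ((d : ℤ) : ℝ) • fun i => (x i : ℝ) := by
    ext i
    simpa using congrArg (Rat.cast : ℚ → ℝ) (hz i)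
  have hz0 : (0 : ℝ) ≤ ((z ⬝ᵥ G *ᵥ z : ℤ) : ℝ) := Int.cast_nonneg (hnonneg z)
  have hcast : ((z ⬝ᵥ G *ᵥ z : ℤ) : ℝ) =
      (fun i => (z i : ℝ)) ⬝ᵥ G.map (Int.cast : ℤ → ℝ) *ᵥ fun i => (z i : ℝ) := by
    simp [dotProduct, mulVec]
  rw [hcast, hzx, mulVec_smul, smul_dotProduct, dotProduct_smul, smul_smul] at hz0
  exact nonneg_of_mul_nonneg_right hz0 (mul_self_pos.mpr hd0)

open scoped MatrixOrder in
theorem exists_basis_gram_eq {R : Matrix ι ι ℝ} (hR : R.PosDef) :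
    ∃ b : Basis ι ℝ (EuclideanSpace ℝ ι), gram ℝ b = R := by
  classical
  obtain ⟨A, hA⟩ := CStarAlgebra.nonneg_iff_eq_star_mul_self.mp hR.posSemidef.nonneg
  have hgram : gram ℝ (fun i => WithLp.toLp 2 (A.col i)) = R := by
    ext i j
    simp [hA, mul_apply, PiLp.inner_apply, mul_comm]
  have hli := linearIndependent_of_posDef_gram (𝕜 := ℝ) (hgram ▸ hR)
  exact ⟨basisOfLinearIndependentOfCardEqFinrank' _ hli finrank_euclideanSpace.symm, by simpa⟩

variable [DecidableEq ι]

theorem exists_mem_zspan_norm_lt (b : Basis ι ℝ (EuclideanSpace ℝ ι)) {r : ℝ} (hr : 0 < r)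
    (h : |(EuclideanSpace.basisFun ι ℝ).toBasis.det b| * 2 ^ Fintype.card ι <
      r ^ Fintype.card ι * volume.real (ball (0 : EuclideanSpace ℝ ι) 1)) :
    ∃ x ∈ Submodule.span ℤ (Set.range b), x ≠ 0 ∧ ‖x‖ < r := by
  have hunit : volume.real (ZSpan.fundamentalDomain (EuclideanSpace.basisFun ι ℝ).toBasis) = 1 := by
    rw [measureReal_congr (ZSpan.fundamentalDomain_ae_parallelepiped _ volume),
      OrthonormalBasis.coe_toBasis, measureReal_def, OrthonormalBasis.volume_parallelepiped,
      ENNReal.toReal_one]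
  have hdomain := ZSpan.measureReal_fundamentalDomain b volume
    (EuclideanSpace.basisFun ι ℝ).toBasis
  rw [hunit, mul_one] at hdomain
  have hball : volume.real (ball (0 : EuclideanSpace ℝ ι) r) =
      r ^ Fintype.card ι * volume.real (ball (0 : EuclideanSpace ℝ ι) 1) := by
    rw [measureReal_def, Measure.addHaar_ball_of_pos _ _ hr, ENNReal.toReal_mul,
      ENNReal.toReal_ofReal (by positivity), finrank_euclideanSpace, measureReal_def]
  rw [← hdomain, ← hball] at h
  have : Countable (Submodule.span ℤ (Set.range b)).toAddSubgroup :=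
    inferInstanceAs (Countable (Submodule.span ℤ (Set.range b)))
  obtain ⟨x, hx0, hx⟩ := exists_ne_zero_mem_lattice_of_measure_mul_two_pow_lt_measure
    (ZSpan.isAddFundamentalDomain' b volume) (s := ball 0 r) (by simp) (convex_ball 0 r) (by
      rw [finrank_euclideanSpace, ← ENNReal.toReal_lt_toReal _ measure_ball_lt_top.ne]
      · simpa [measureReal_def] using h
      · exact ENNReal.mul_ne_top (ZSpan.fundamentalDomain_isBounded b).measure_lt_top.ne (by simp))
  exact ⟨x, x.2, by simpa using hx0, by simpa using hx⟩

theorem exists_int_dotProduct_mulVec_lt {R : Matrix ι ι ℝ} (hR : R.PosDef) {c : ℝ} (hc : 0 < c)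
    (h : R.det * 4 ^ Fintype.card ι <
      c ^ Fintype.card ι * volume.real (ball (0 : EuclideanSpace ℝ ι) 1) ^ 2) :
    ∃ z : ι → ℤ, z ≠ 0 ∧ (fun i => (z i : ℝ)) ⬝ᵥ R *ᵥ (fun i => (z i : ℝ)) < c := by
  obtain ⟨b, rfl⟩ := exists_basis_gram_eq hR
  have hdet : (gram ℝ b).det = (EuclideanSpace.basisFun ι ℝ).toBasis.det b ^ 2 := by
    rw [gram_eq_conjTranspose_mul (EuclideanSpace.basisFun ι ℝ), det_mul, det_conjTranspose,
      star_trivial, sq]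
    rfl
  obtain ⟨x, hx, hx0, hxc⟩ := exists_mem_zspan_norm_lt b (Real.sqrt_pos.mpr hc) <| by
    refine lt_of_pow_lt_pow_left₀ 2 (by positivity) ?_
    rw [mul_pow, mul_pow, sq_abs, ← hdet, pow_right_comm 2, pow_right_comm √c, Real.sq_sqrt hc.le]
    norm_num [h]
  obtain ⟨z, rfl⟩ := (Submodule.mem_span_range_iff_exists_fun ℤ).mp hx
  refine ⟨z, fun hz => hx0 (by simp [hz]), ?_⟩
  have hnorm := star_dotProduct_gram_mulVec (𝕜 := ℝ) b (fun i => (z i : ℝ)) fun i => (z i : ℝ)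
  rw [star_trivial] at hnorm
  simp only [← Int.cast_smul_eq_zsmul ℝ] at hxc
  rw [hnorm, real_inner_self_eq_norm_sq]
  exact (Real.lt_sqrt (norm_nonneg _)).mp hxc

end GeometryOfNumbers

section UnitBallVolume

open MeasureTheory Metric

theorem volume_real_unitBall_even {m : ℕ} (hm : 0 < m) :
    volume.real (ball (0 : EuclideanSpace ℝ (Fin (2 * m))) 1) = Real.pi ^ m / m.factorial := by
  have : Nontrivial (EuclideanSpace ℝ (Fin (2 * m))) :=
    Module.nontrivial_of_finrank_pos (R := ℝ) (by rw [finrank_euclideanSpace_fin]; omega)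
  rw [measureReal_def, InnerProductSpace.volume_ball_of_dim_even finrank_euclideanSpace_fin,
    ENNReal.ofReal_one, one_pow, one_mul, ENNReal.toReal_ofReal (by positivity)]

theorem volume_real_unitBall_odd (m : ℕ) :
    volume.real (ball (0 : EuclideanSpace ℝ (Fin (2 * m + 1))) 1) =
      Real.pi ^ m * 2 ^ (m + 1) / (2 * m + 1).doubleFactorial := by
  rw [measureReal_def, InnerProductSpace.volume_ball_of_dim_odd finrank_euclideanSpace_fin,
    ENNReal.ofReal_one, one_pow, one_mul, ENNReal.toReal_ofReal (by positivity),
    finrank_euclideanSpace_fin]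

theorem le_volume_real_unitBall_even {m : ℕ} (hm : 0 < m) :
    (3.14 ^ m / m.factorial) ^ 2 ≤
      volume.real (ball (0 : EuclideanSpace ℝ (Fin (2 * m))) 1) ^ 2 := by
  rw [volume_real_unitBall_even hm]
  have := Real.pi_gt_d2.le
  gcongr

theorem le_volume_real_unitBall_odd (m : ℕ) :
    (3.14 ^ m * 2 ^ (m + 1) / (2 * m + 1).doubleFactorial) ^ 2 ≤
      volume.real (ball (0 : EuclideanSpace ℝ (Fin (2 * m + 1))) 1) ^ 2 := by
  rw [volume_real_unitBall_odd]
  have := Real.pi_gt_d2.le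
  gcongr

theorem four_pow_lt_two_pow_mul_unitBall {n : ℕ} (h1 : 1 ≤ n) (h2 : n ≤ 2) :
    (4 : ℝ) ^ n < 2 ^ n * volume.real (ball (0 : EuclideanSpace ℝ (Fin n)) 1) ^ 2 := by
  obtain ⟨m, rfl | rfl⟩ := Nat.even_or_odd' n
  · refine lt_of_lt_of_le ?_
      (mul_le_mul_of_nonneg_left (le_volume_real_unitBall_even (by omega)) (by positivity))
    obtain rfl : m = 1 := by omega
    norm_num
  · refine lt_of_lt_of_le ?_
      (mul_le_mul_of_nonneg_left (le_volume_real_unitBall_odd m) (by positivity))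
    obtain rfl : m = 0 := by omega
    norm_num

theorem eight_mul_four_pow_lt_six_pow_mul_unitBall {n : ℕ} (h1 : 2 ≤ n) (h2 : n ≤ 18) :
    8 * (4 : ℝ) ^ n < 6 ^ n * volume.real (ball (0 : EuclideanSpace ℝ (Fin n)) 1) ^ 2 := by
  obtain ⟨m, rfl | rfl⟩ := Nat.even_or_odd' n
  · refine lt_of_lt_of_le ?_
      (mul_le_mul_of_nonneg_left (le_volume_real_unitBall_even (by omega)) (by positivity))
    have : 1 ≤ m := by omega
    have : m ≤ 9 := by omega
    interval_cases m <;> norm_num [Nat.factorial]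
  · refine lt_of_lt_of_le ?_
      (mul_le_mul_of_nonneg_left (le_volume_real_unitBall_odd m) (by positivity))
    have : 1 ≤ m := by omega
    have : m ≤ 8 := by omega
    interval_cases m <;> norm_num [Nat.doubleFactorial]

theorem four_mul_four_pow_lt_six_pow_mul_unitBall {n : ℕ} (h1 : 2 ≤ n) (h2 : n ≤ 19) :
    4 * (4 : ℝ) ^ n < 6 ^ n * volume.real (ball (0 : EuclideanSpace ℝ (Fin n)) 1) ^ 2 := by
  rcases h2.lt_or_eq with h | rfl
  · refine lt_trans ?_ (eight_mul_four_pow_lt_six_pow_mul_unitBall h1 (by omega))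
    gcongr
    norm_num
  · refine lt_of_lt_of_le ?_
      (mul_le_mul_of_nonneg_left (le_volume_real_unitBall_odd 9) (by positivity))
    norm_num [Nat.doubleFactorial]

end UnitBallVolume

/-- A `ℤ`-valued bilinear form on an abelian group; a lattice is a free module of finite rank
together with such a form. -/
abbrev IntForm (M : Type*) [AddCommGroup M] := LinearMap.BilinForm ℤ M

namespace IntForm

open Module

section Basic

variable {M N K L : Type*} [AddCommGroup M] [AddCommGroup N] [AddCommGroup K] [AddCommGroup L]

/-- Unimodularity of a symmetric form: it identifies the module with its dual. -/
structure IsUnimodular (B : IntForm M) : Prop where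
  symm : ∀ x y, B x y = B y x
  bijective : Function.Bijective B

/-- Positive definiteness. -/
def PosDef (B : IntForm M) : Prop := ∀ x, x ≠ 0 → 0 < B x x

/-- A form is even if all its norms `B x x` are even. -/
def IsEven (B : IntForm M) : Prop := ∀ x, Even (B x x)

/-- `h` respects the forms `C` and `B`; it need not be injective or surjective. -/
def IsIsometry (C : IntForm N) (B : IntForm M) (h : N →ₗ[ℤ] M) : Prop :=
  ∀ x y, B (h x) (h y) = C x y

/-- Two forms are isometric if a linear equivalence carries one to the other. -/
def Isometric (B : IntForm M) (C : IntForm N) : Prop := ∃ e : M ≃ₗ[ℤ] N, IsIsometry B C e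

/-- The orthogonal direct sum of two forms. -/
def orthSum (B : IntForm M) (C : IntForm N) : IntForm (M × N) :=
  B.compl₁₂ (.fst ℤ M N) (.fst ℤ M N) + C.compl₁₂ (.snd ℤ M N) (.snd ℤ M N)

@[simp]
theorem orthSum_apply (B : IntForm M) (C : IntForm N) (x y : M × N) :
    (B.orthSum C) x y = B x.1 y.1 + C x.2 y.2 := rfl

theorem orthSum_symm {B : IntForm M} {C : IntForm N} (hB : ∀ x y, B x y = B y x)
    (hC : ∀ x y, C x y = C y x) (x y : M × N) : (B.orthSum C) x y = (B.orthSum C) y x :=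
  congrArg₂ (· + ·) (hB x.1 y.1) (hC x.2 y.2)

theorem Isometric.refl (B : IntForm M) : Isometric B B := ⟨.refl ℤ M, fun _ _ => rfl⟩

theorem Isometric.symm {B : IntForm M} {C : IntForm N} : Isometric B C → Isometric C B
  | ⟨e, he⟩ => ⟨e.symm, fun x y => by simpa using (he (e.symm x) (e.symm y)).symm⟩

theorem Isometric.trans {B : IntForm M} {C : IntForm N} {D : IntForm K} :
    Isometric B C → Isometric C D → Isometric B D
  | ⟨e, he⟩, ⟨f, hf⟩ => ⟨e.trans f, fun x y => (hf (e x) (e y)).trans (he x y)⟩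

theorem Isometric.orthSum {B : IntForm M} {C : IntForm N} {B' : IntForm K} {C' : IntForm L} :
    Isometric B B' → Isometric C C' → Isometric (B.orthSum C) (B'.orthSum C')
  | ⟨e, he⟩, ⟨f, hf⟩ => ⟨e.prodCongr f, fun x y => congrArg₂ (· + ·) (he x.1 y.1) (hf x.2 y.2)⟩

theorem Isometric.orthSum_assoc (B : IntForm M) (C : IntForm N) (D : IntForm K) :
    Isometric ((B.orthSum C).orthSum D) (B.orthSum (C.orthSum D)) :=
  ⟨.prodAssoc ℤ M N K, fun _ _ => by simp [add_assoc]⟩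

theorem Isometric.orthSum_comm (B : IntForm M) (C : IntForm N) :
    Isometric (B.orthSum C) (C.orthSum B) :=
  ⟨.prodComm ℤ M N, fun _ _ => by simp [add_comm]⟩

theorem Isometric.finrank_eq {B : IntForm M} {C : IntForm N} :
    Isometric B C → finrank ℤ M = finrank ℤ N
  | ⟨e, _⟩ => e.finrank_eq

theorem Isometric.isUnimodular {B : IntForm M} {C : IntForm N} (h : Isometric B C)
    (hB : IsUnimodular B) : IsUnimodular C := by
  obtain ⟨e, he⟩ := h.symm
  refine ⟨fun x y => by rw [← he, ← he, hB.symm], ?_⟩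
  have hC : ⇑C = e.dualMap ∘ B ∘ e := by
    ext x y
    exact (he x y).symm
  rw [hC]
  exact e.dualMap.bijective.comp (hB.bijective.comp e.bijective)

theorem Isometric.posDef {B : IntForm M} {C : IntForm N} (h : Isometric B C) (hB : PosDef B) :
    PosDef C := by
  obtain ⟨e, he⟩ := h.symm
  exact fun x hx => he x x ▸ hB (e x) (by simpa using hx)

theorem IsUnimodular.orthSum {B : IntForm M} {C : IntForm N} (hB : IsUnimodular B)
    (hC : IsUnimodular C) : IsUnimodular (B.orthSum C) := by
  refine ⟨orthSum_symm hB.symm hC.symm, ?_⟩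
  have h : ⇑(B.orthSum C) = LinearMap.coprodEquiv ℤ ∘ Prod.map B C := by
    ext x y <;> simp
  rw [h]
  exact (LinearMap.coprodEquiv ℤ).bijective.comp (hB.bijective.prodMap hC.bijective)

theorem IsUnimodular.of_orthSum_right {B : IntForm M} {C : IntForm N}
    (h : IsUnimodular (B.orthSum C)) : IsUnimodular C := by
  refine ⟨fun x y => by simpa using h.symm (0, x) (0, y), ?_, fun f => ?_⟩
  · refine (injective_iff_map_eq_zero C).mpr fun x hx => ?_
    have : (B.orthSum C) (0, x) = 0 := by
      ext y <;> simp [hx]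
    simpa using (map_eq_zero_iff _ h.bijective.injective).mp this
  · obtain ⟨x, hx⟩ := h.bijective.surjective (f ∘ₗ .snd ℤ M N)
    exact ⟨x.2, LinearMap.ext fun y => by simpa using LinearMap.congr_fun hx (0, y)⟩

/-- Every vector decomposes along a unimodular sublattice, because pairing with it gives a
functional on the sublattice, which the unimodular form represents. -/
theorem isometric_orthSum_orthogonal {B : IntForm M} {C : IntForm N} {h : N →ₗ[ℤ] M}
    (hB : ∀ x y, B x y = B y x) (hC : IsUnimodular C) (hh : IsIsometry C B h) :
    Isometric B (C.orthSum (B.restrict (B.orthogonal (LinearMap.range h)))) := by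
  have hKN : ∀ (n : N) (k : B.orthogonal (LinearMap.range h)), B (h n) k = 0 :=
    fun n k => k.2 _ ⟨n, rfl⟩
  have hNK : ∀ (n : N) (k : B.orthogonal (LinearMap.range h)), B k (h n) = 0 :=
    fun n k => (hB _ _).trans (hKN n k)
  let f := h.coprod (B.orthogonal (LinearMap.range h)).subtype
  have hf : ∀ x y, B (f x) (f y) =
      (C.orthSum (B.restrict (B.orthogonal (LinearMap.range h)))) x y := fun x y => by
    simp [f, hh x.1 y.1, hKN, hNK]
  have hinj : Function.Injective f := by
    refine (injective_iff_map_eq_zero f).mpr fun x hx => ?_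
    have h1 : C x.1 = 0 := by
      ext n
      simpa [hx] using (hf x (n, 0)).symm
    have h2 : x.1 = 0 := (map_eq_zero_iff _ hC.bijective.injective).mp h1
    refine Prod.ext h2 ?_
    simpa [f, h2] using hx
  have hsurj : Function.Surjective f := by
    intro x
    obtain ⟨n, hn⟩ := hC.bijective.surjective (h.dualMap (B x))
    refine ⟨(n, ⟨x - h n, ?_⟩), by simp [f]⟩
    rintro _ ⟨m, rfl⟩
    have h1 : C n m = B x (h m) := LinearMap.congr_fun hn m
    change B (h m) (x - h n) = 0
    rw [map_sub, hh, hC.symm, h1, hB, sub_self]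
  exact Isometric.symm ⟨.ofBijective f ⟨hinj, hsurj⟩, hf⟩

theorem Isometric.of_isIsometry [Module.Finite ℤ M] [Module.Free ℤ M] [Module.Finite ℤ N]
    [Module.Free ℤ N] {B : IntForm M} {C : IntForm N} {h : N →ₗ[ℤ] M}
    (hB : ∀ x y, B x y = B y x) (hC : IsUnimodular C) (hh : IsIsometry C B h)
    (hrank : finrank ℤ N = finrank ℤ M) : Isometric C B := by
  obtain ⟨e, he⟩ := (isometric_orthSum_orthogonal hB hC hh).symm
  have hK : finrank ℤ (B.orthogonal (LinearMap.range h)) = 0 := by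
    have := e.finrank_eq
    rw [finrank_prod] at this
    omega
  have := (finrank_eq_zero_iff_of_free ℤ _).mp hK
  let _ : Unique (B.orthogonal (LinearMap.range h)) := uniqueOfSubsingleton 0
  exact ⟨(LinearEquiv.prodUnique (R := ℤ) (M := N)).symm.trans e, fun x y =>
    (he (x, 0) (y, 0)).trans (by simp)⟩

end Basic

section Planes

variable {M N K : Type*} [AddCommGroup M] [AddCommGroup N] [AddCommGroup K]

/-- The rank one lattice `⟨e⟩`. -/
def rankOne (e : ℤ) : IntForm ℤ := e • LinearMap.mul ℤ ℤ

/-- The odd indefinite unimodular plane `⟨1⟩ ⊕ ⟨-1⟩`. -/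
def oddPlane : IntForm (ℤ × ℤ) := (rankOne 1).orthSum (rankOne (-1))

/-- The hyperbolic plane, with the sign chosen so that the norm is `-2xy`: in the sum with a
positive definite form, the cone of vectors of nonpositive norm then lies over the quadrants
`0 ≤ xy`. -/
def hypPlane : IntForm (ℤ × ℤ) :=
  -((LinearMap.mul ℤ ℤ).compl₁₂ (.fst ℤ ℤ ℤ) (.snd ℤ ℤ ℤ) +
    (LinearMap.mul ℤ ℤ).compl₁₂ (.snd ℤ ℤ ℤ) (.fst ℤ ℤ ℤ))

@[simp]
theorem rankOne_apply (e x y : ℤ) : rankOne e x y = e * (x * y) := rfl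

@[simp]
theorem oddPlane_apply (x y : ℤ × ℤ) : oddPlane x y = x.1 * y.1 - x.2 * y.2 := by
  simp [oddPlane, sub_eq_add_neg]

@[simp]
theorem hypPlane_apply (x y : ℤ × ℤ) : hypPlane x y = -(x.1 * y.2 + x.2 * y.1) := rfl

theorem isUnimodular_rankOne {e : ℤ} (he : e * e = 1) : IsUnimodular (rankOne e) := by
  refine ⟨fun x y => by simp [mul_comm x], ?_, fun f => ⟨e * f 1, ?_⟩⟩
  · refine (injective_iff_map_eq_zero _).mpr fun x hx => ?_
    have h1 : e * x = 0 := by simpa using LinearMap.congr_fun hx 1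
    linear_combination e * h1 - x * he
  · ext
    simp only [rankOne_apply]
    linear_combination f 1 * he

theorem isUnimodular_oddPlane : IsUnimodular oddPlane :=
  (isUnimodular_rankOne (by norm_num)).orthSum (isUnimodular_rankOne (by norm_num))

theorem isUnimodular_hypPlane : IsUnimodular hypPlane := by
  refine ⟨fun x y => by simp only [hypPlane_apply]; ring, ?_, fun f => ?_⟩
  · refine (injective_iff_map_eq_zero _).mpr fun x hx => ?_
    exact Prod.ext (by simpa using LinearMap.congr_fun hx (0, 1))
      (by simpa using LinearMap.congr_fun hx (1, 0))
  · refine ⟨(-f (0, 1), -f (1, 0)), ?_⟩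
    ext <;> simp

theorem PosDef.nonneg {B : IntForm M} (hB : PosDef B) (x : M) : 0 ≤ B x x :=
  (eq_or_ne x 0).elim (fun h => by simp [h]) fun h => (hB x h).le

theorem PosDef.orthSum {B : IntForm M} {C : IntForm N} (hB : PosDef B) (hC : PosDef C) :
    PosDef (B.orthSum C) := by
  intro x hx
  rw [orthSum_apply]
  by_cases h : x.1 = 0
  · exact add_pos_of_nonneg_of_pos (hB.nonneg _) (hC _ fun h2 => hx (Prod.ext h h2))
  · exact add_pos_of_pos_of_nonneg (hB _ h) (hC.nonneg _)

theorem IsIsometry.coprod {B : IntForm M} {C : IntForm N} {D : IntForm K} {h : N →ₗ[ℤ] M}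
    {k : K →ₗ[ℤ] M} (hB : ∀ x y, B x y = B y x) (hh : IsIsometry C B h) (hk : IsIsometry D B k)
    (hhk : ∀ x y, B (h x) (k y) = 0) : IsIsometry (C.orthSum D) B (h.coprod k) := fun x y => by
  simp [hh x.1 y.1, hk x.2 y.2, hhk, hB (k _) (h _)]

theorem isIsometry_toSpanSingleton {B : IntForm M} {p : M} {e : ℤ} (hp : B p p = e) :
    IsIsometry (rankOne e) B (LinearMap.toSpanSingleton ℤ M p) := fun x y => by
  simp [hp]
  ring

theorem isIsometry_oddPlane {B : IntForm M} (hB : ∀ x y, B x y = B y x) {p q : M}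
    (hp : B p p = 1) (hq : B q q = -1) (hpq : B p q = 0) :
    IsIsometry oddPlane B
      ((LinearMap.toSpanSingleton ℤ M p).coprod (LinearMap.toSpanSingleton ℤ M q)) :=
  (isIsometry_toSpanSingleton hp).coprod hB (isIsometry_toSpanSingleton hq) fun _ _ => by
    simp [hpq]

theorem isIsometry_hypPlane {B : IntForm M} (hB : ∀ x y, B x y = B y x) {u v : M}
    (hu : B u u = 0) (hv : B v v = 0) (huv : B u v = -1) :
    IsIsometry hypPlane B
      ((LinearMap.toSpanSingleton ℤ M u).coprod (LinearMap.toSpanSingleton ℤ M v)) :=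
  fun x y => by
    simp [hu, hv, huv, hB v u]
    ring

theorem IsUnimodular.exists_eq_smul_of_forall_dvd {B : IntForm M} (hB : IsUnimodular B) {c : ℤ}
    (hc : c ≠ 0) {w : M} (hw : ∀ x, c ∣ B w x) : ∃ u, w = c • u := by
  choose g hg using hw
  let f : M →ₗ[ℤ] ℤ := AddMonoidHom.toIntLinearMap (AddMonoidHom.mk' g fun x y =>
    mul_left_cancel₀ hc (by rw [mul_add, ← hg, ← hg, ← hg, map_add]))
  obtain ⟨u, hu⟩ := hB.bijective.surjective f
  refine ⟨u, hB.bijective.injective (LinearMap.ext fun x => ?_)⟩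
  simp [hu, hg, f]

theorem IsUnimodular.exists_eq_smul_primitive {B : IntForm M} (hB : IsUnimodular B) {w : M}
    (hw : w ≠ 0) : ∃ (d : ℤ) (u z : M), d ≠ 0 ∧ w = d • u ∧ B u z = 1 := by
  obtain ⟨d, hd⟩ := (IsPrincipalIdealRing.principal (LinearMap.range (B w))).principal
  have hd0 : d ≠ 0 := by
    rintro rfl
    rw [Submodule.span_zero_singleton, LinearMap.range_eq_bot] at hd
    exact hw ((map_eq_zero_iff _ hB.bijective.injective).mp hd)
  obtain ⟨u, rfl⟩ := hB.exists_eq_smul_of_forall_dvd hd0 fun x =>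
    Ideal.mem_span_singleton.mp (hd.le (LinearMap.mem_range_self (B w) x))
  obtain ⟨z, hz⟩ : d ∈ LinearMap.range (B (d • u)) := hd ▸ Submodule.mem_span_singleton_self d
  exact ⟨d, u, z, hd0, rfl, mul_left_cancel₀ hd0 (by simpa using hz)⟩

/-- Correcting a vector dual to the isotropic one by a multiple of the latter changes its norm by
any even number, so that the norm becomes `0` or `1`. -/
theorem IsUnimodular.exists_plane_of_isotropic {B : IntForm M} (hB : IsUnimodular B) {w : M}
    (hw : w ≠ 0) (hww : B w w = 0) :
    ∃ P : IntForm (ℤ × ℤ), (P = hypPlane ∨ P = oddPlane) ∧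
      ∃ h : ℤ × ℤ →ₗ[ℤ] M, IsIsometry P B h ∧ w ∈ LinearMap.range h := by
  obtain ⟨d, u, z, hd, rfl, huz⟩ := hB.exists_eq_smul_primitive hw
  have huu : B u u = 0 := by simpa [hd] using hww
  have hzu : B z u = 1 := (hB.symm _ _).trans huz
  obtain ⟨j, hj⟩ := Int.even_or_odd' (B z z)
  rcases hj with hj | hj
  · refine ⟨_, .inl rfl, _, isIsometry_hypPlane hB.symm (u := u) (v := j • u - z) huu ?_ ?_,
      (d, 0), by simp⟩
    · simp [huu, huz, hzu, hj]
      ring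
    · simp [huu, huz]
  · refine ⟨_, .inr rfl, _, isIsometry_oddPlane hB.symm (p := z - j • u) (q := z - (j + 1) • u)
      ?_ ?_ ?_, (d, -d), ?_⟩
    · simp [huu, huz, hzu, hj]
      ring
    · simp [huu, huz, hzu, hj]
      ring
    · simp [huu, huz, hzu, hj]
      ring
    · simp only [LinearMap.coprod_apply, LinearMap.toSpanSingleton_apply]
      module

theorem isUnimodular_of_eq_plane {P : IntForm (ℤ × ℤ)} (hP : P = hypPlane ∨ P = oddPlane) :
    IsUnimodular P := by
  rcases hP with rfl | rfl
  exacts [isUnimodular_hypPlane, isUnimodular_oddPlane]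

theorem isometric_rankOne_orthSum_plane {P : IntForm (ℤ × ℤ)} (hP : P = hypPlane ∨ P = oddPlane) :
    Isometric ((rankOne 1).orthSum P) ((rankOne 1).orthSum oddPlane) := by
  rcases hP with rfl | rfl
  · have hB : IsUnimodular ((rankOne 1).orthSum hypPlane) :=
      (isUnimodular_rankOne (by norm_num)).orthSum isUnimodular_hypPlane
    have hline : IsIsometry (rankOne 1) ((rankOne 1).orthSum hypPlane) _ :=
      isIsometry_toSpanSingleton (p := (1, 0, 1)) (by simp)
    have hplane : IsIsometry oddPlane ((rankOne 1).orthSum hypPlane) _ :=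
      isIsometry_oddPlane hB.symm (p := (1, 1, 0)) (q := (1, 1, 1)) (by simp) (by simp) (by simp)
    have hC : IsUnimodular ((rankOne 1).orthSum oddPlane) :=
      (isUnimodular_rankOne (by norm_num)).orthSum isUnimodular_oddPlane
    exact (Isometric.of_isIsometry hB.symm hC
      (hline.coprod hB.symm hplane fun x y => by simp) rfl).symm
  · exact .refl _

end Planes

section SquareNorm

variable {M : Type*} [AddCommGroup M]

/-- If `x` is orthogonal to the isotropic vector `w = (n, y)`, then `n² (x, x)` is the norm of
`n x.2 - x.1 y`. -/
theorem PosDef.pos_or_smul_eq_of_orthogonal_isotropic {B : IntForm M} (hB : PosDef B)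
    (hs : ∀ x y, B x y = B y x) {n : ℤ} {y : M} (hy : B y y = n ^ 2) {x : ℤ × M}
    (hx : ((rankOne (-1)).orthSum B) (n, y) x = 0) :
    0 < ((rankOne (-1)).orthSum B) x x ∨ n • x = x.1 • (n, y) := by
  obtain ⟨m, l⟩ := x
  simp only [orthSum_apply, rankOne_apply] at hx ⊢
  have hnorm : B (n • l - m • y) (n • l - m • y) = n ^ 2 * (-1 * (m * m) + B l l) := by
    simp only [map_sub, map_smul, LinearMap.sub_apply, LinearMap.smul_apply, smul_eq_mul, hy,
      hs l y]
    linear_combination -2 * n * m * hx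
  by_cases h : n • l - m • y = 0
  · exact .inr (Prod.ext (mul_comm n m) (sub_eq_zero.mp h))
  · have := hnorm ▸ hB _ h
    exact .inl (pos_of_mul_pos_right this (sq_nonneg n))

variable [Module.Free ℤ M] [Module.Finite ℤ M]

theorem exists_isometric_pi_fin (B : IntForm M) {k : ℕ}
    (hk : finrank ℤ M = k) : ∃ C : IntForm (Fin k → ℤ), Isometric B C := by
  let e := (finBasisOfFinrankEq ℤ M hk).equivFun
  exact ⟨B.compl₁₂ e.symm e.symm, e, fun x y => by simp⟩

theorem exists_isometric_plane_orthSum_posDef {B : IntForm M}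
    (hB : IsUnimodular B) (hpos : PosDef B) {k : ℕ} (hk : finrank ℤ M = k + 1) {n : ℤ} {y : M}
    (hn : n ≠ 0) (hy : B y y = n ^ 2) :
    ∃ (P : IntForm (ℤ × ℤ)) (C : IntForm (Fin k → ℤ)), (P = hypPlane ∨ P = oddPlane) ∧
      IsUnimodular C ∧ PosDef C ∧ Isometric ((rankOne (-1)).orthSum B) (P.orthSum C) := by
  have hV : IsUnimodular ((rankOne (-1)).orthSum B) :=
    (isUnimodular_rankOne (by norm_num)).orthSum hB
  have hw : ((n, y) : ℤ × M) ≠ 0 := fun h => hn (congrArg Prod.fst h)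
  obtain ⟨P, hP, h, hh, hwh⟩ := hV.exists_plane_of_isotropic hw (by simp [hy]; ring)
  have hPu := isUnimodular_of_eq_plane hP
  let K := ((rankOne (-1)).orthSum B).orthogonal (LinearMap.range h)
  have hsplit := isometric_orthSum_orthogonal hV.symm hPu hh
  have hKpos : PosDef (((rankOne (-1)).orthSum B).restrict K) := by
    intro x hx
    refine (hpos.pos_or_smul_eq_of_orthogonal_isotropic hB.symm hy
      (x.2 _ hwh)).resolve_right fun hnx => hx ?_
    obtain ⟨p, hp⟩ : n • (x : ℤ × M) ∈ LinearMap.range h := hnx ▸ Submodule.smul_mem _ _ hwh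
    have hp0 : P p = 0 := LinearMap.ext fun q => by
      rw [← hh, hp, hV.symm, map_smul, x.2 _ ⟨q, rfl⟩, smul_zero, LinearMap.zero_apply]
    rw [(map_eq_zero_iff _ hPu.bijective.injective).mp hp0, map_zero] at hp
    exact Subtype.ext ((smul_eq_zero.mp hp.symm).resolve_left hn)
  have hKrank : finrank ℤ K = k := by
    have := hsplit.finrank_eq
    simp only [finrank_prod, finrank_self] at this
    change _ = _ + finrank ℤ K at this
    omega
  obtain ⟨C, hC⟩ := exists_isometric_pi_fin (((rankOne (-1)).orthSum B).restrict K) hKrank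
  exact ⟨P, C, hP, hC.isUnimodular (hsplit.isUnimodular hV).of_orthSum_right, hC.posDef hKpos,
    hsplit.trans ((Isometric.refl P).orthSum hC)⟩

theorem exists_isometric_oddPlane_orthSum_rankOne {B : IntForm M}
    (hB : IsUnimodular B) (hpos : PosDef B) {k : ℕ} (hk : finrank ℤ M = k + 1) {n : ℤ} {y : M}
    (hn : n ≠ 0) (hy : B y y = n ^ 2) :
    ∃ C : IntForm (Fin k → ℤ), IsUnimodular C ∧ PosDef C ∧
      Isometric (oddPlane.orthSum B) (oddPlane.orthSum ((rankOne 1).orthSum C)) := by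
  obtain ⟨P, C, hP, hC, hCpos, hBC⟩ := exists_isometric_plane_orthSum_posDef hB hpos hk hn hy
  have hplane : Isometric ((rankOne 1).orthSum P) (oddPlane.orthSum (rankOne 1)) :=
    (isometric_rankOne_orthSum_plane hP).trans (.orthSum_comm _ _)
  exact ⟨C, hC, hCpos, (Isometric.orthSum_assoc _ _ _).trans
    (((Isometric.refl _).orthSum hBC).trans ((Isometric.orthSum_assoc _ _ _).symm.trans
      ((hplane.orthSum (.refl C)).trans (.orthSum_assoc _ _ _))))⟩

end SquareNorm

section Discriminant

open MeasureTheory Metric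

variable {M N ι : Type*} [AddCommGroup M] [AddCommGroup N] [Fintype ι] [DecidableEq ι]

theorem isUnimodular_iff_isUnit_det {B : IntForm M} (hB : ∀ x y, B x y = B y x)
    (b : Basis ι ℤ M) : IsUnimodular B ↔ IsUnit (LinearMap.BilinForm.toMatrix b B).det := by
  have htr : (LinearMap.BilinForm.toMatrix b B)ᵀ = LinearMap.toMatrix b b.dualBasis B := by
    ext i j
    simp [LinearMap.BilinForm.toMatrix_apply, LinearMap.toMatrix_apply]
  rw [← det_transpose, htr]
  exact ⟨fun h => (LinearEquiv.ofBijective B h.bijective).isUnit_det b b.dualBasis,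
    fun h => ⟨hB, (LinearEquiv.ofIsUnitDet h).bijective⟩⟩

theorem det_toMatrix_eq_card_quotient_sq_mul_det {C : IntForm N} {B : IntForm M} {f : N →ₗ[ℤ] M}
    (hf : IsIsometry C B f) (hinj : Function.Injective f) (b : Basis ι ℤ M) (c : Basis ι ℤ N) :
    (LinearMap.BilinForm.toMatrix c C).det =
      (Nat.card (M ⧸ LinearMap.range f) : ℤ) ^ 2 * (LinearMap.BilinForm.toMatrix b B).det := by
  have := Module.Free.of_basis b
  have := Module.Finite.of_basis b
  have hP : (LinearMap.toMatrix c b f).det.natAbs = Nat.card (M ⧸ LinearMap.range f) := by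
    rw [← Submodule.natAbs_det_basis_change b _ (c.map (LinearEquiv.ofInjective f hinj)),
      Basis.det_apply]
    congr 2
    ext i j
    simp [Basis.toMatrix_apply, LinearMap.toMatrix_apply]
  have hC : C = B.comp f f := LinearMap.ext₂ fun x y => (hf x y).symm
  rw [hC, LinearMap.BilinForm.toMatrix_comp b c B f f, det_mul, det_mul, det_transpose, ← hP,
    Int.natAbs_sq]
  ring

theorem PosDef.toMatrix_map_intCast {B : IntForm M} (hpos : PosDef B)
    (hB : ∀ x y, B x y = B y x) (b : Basis ι ℤ M) :
    ((LinearMap.BilinForm.toMatrix b B).map (Int.cast : ℤ → ℝ)).PosDef := by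
  have hnonneg : ∀ x, 0 ≤ x ⬝ᵥ LinearMap.BilinForm.toMatrix b B *ᵥ x := fun x => by
    rw [LinearMap.BilinForm.dotProduct_toMatrix_mulVec]
    exact hpos.nonneg _
  have hdet : (LinearMap.BilinForm.toMatrix b B).det ≠ 0 := fun h => by
    obtain ⟨v, hv, h0⟩ := exists_mulVec_eq_zero_iff.mpr h
    have := LinearMap.BilinForm.dotProduct_toMatrix_mulVec b B v v
    rw [h0, dotProduct_zero] at this
    exact (hpos _ (b.equivFun.symm.map_ne_zero_iff.mpr hv)).ne this
  rw [(posSemidef_map_intCast (IsSymm.ext fun i j => by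
    simp [LinearMap.BilinForm.toMatrix_apply, hB (b i)]) hnonneg).posDef_iff_det_ne_zero]
  have h := (Int.castRingHom ℝ).map_det (LinearMap.BilinForm.toMatrix b B)
  exact h ▸ Int.cast_ne_zero.mpr hdet

variable [Module.Free ℤ M] [Module.Finite ℤ M] [Module.Free ℤ N] [Module.Finite ℤ N]

/-- The discriminant of a lattice: the determinant of a Gram matrix. It does not depend on the
basis, see `disc_eq_det`. -/
noncomputable def disc (B : IntForm M) : ℤ := (LinearMap.BilinForm.toMatrix (finBasis ℤ M) B).det

theorem disc_eq_det (B : IntForm M) (b : Basis ι ℤ M) :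
    disc B = (LinearMap.BilinForm.toMatrix b B).det := by
  let e := b.indexEquiv (finBasis ℤ M)
  have h := det_toMatrix_eq_card_quotient_sq_mul_det (C := B) (B := B) (f := .id) (fun _ _ => rfl)
    Function.injective_id (b.reindex e) (finBasis ℤ M)
  have hre : LinearMap.BilinForm.toMatrix (b.reindex e) B =
      (LinearMap.BilinForm.toMatrix b B).submatrix e.symm e.symm := by
    ext i j
    simp [LinearMap.BilinForm.toMatrix_apply]
  have hcard : Nat.card (M ⧸ LinearMap.range (LinearMap.id : M →ₗ[ℤ] M)) = 1 := by
    rw [LinearMap.range_id]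
    exact Nat.card_unique
  rw [disc, h, hcard, hre, det_submatrix_equiv_self]
  simp

theorem disc_rankOne (e : ℤ) : disc (rankOne e) = e := by
  rw [disc_eq_det _ (Basis.singleton Unit ℤ)]
  simp [LinearMap.BilinForm.toMatrix_apply]

theorem disc_orthSum (B : IntForm M) (C : IntForm N) : disc (B.orthSum C) = disc B * disc C := by
  have h : LinearMap.BilinForm.toMatrix ((finBasis ℤ M).prod (finBasis ℤ N)) (B.orthSum C) =
      fromBlocks (LinearMap.BilinForm.toMatrix (finBasis ℤ M) B) 0 0
        (LinearMap.BilinForm.toMatrix (finBasis ℤ N) C) := by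
    ext (i | i) (j | j) <;> simp [LinearMap.BilinForm.toMatrix_apply]
  rw [disc_eq_det _ ((finBasis ℤ M).prod (finBasis ℤ N)), h, det_fromBlocks_zero₂₁, disc, disc]

theorem cast_disc (B : IntForm M) : (disc B : ℝ) =
    ((LinearMap.BilinForm.toMatrix (finBasis ℤ M) B).map (Int.cast : ℤ → ℝ)).det :=
  (Int.castRingHom ℝ).map_det _

theorem PosDef.disc_pos {B : IntForm M} (hpos : PosDef B) (hB : ∀ x y, B x y = B y x) :
    0 < disc B := by
  have := (hpos.toMatrix_map_intCast hB (finBasis ℤ M)).det_pos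
  rwa [← cast_disc, Int.cast_pos] at this

theorem IsUnimodular.disc_eq_one {B : IntForm M} (hB : IsUnimodular B) (hpos : PosDef B) :
    disc B = 1 :=
  (Int.isUnit_iff.mp ((isUnimodular_iff_isUnit_det hB.symm (finBasis ℤ M)).mp hB)).resolve_right
    fun h => by linarith [hpos.disc_pos hB.symm, disc.eq_1 B]

theorem PosDef.exists_norm_lt {B : IntForm M} (hpos : PosDef B) (hB : ∀ x y, B x y = B y x)
    {k : ℕ} (hk : finrank ℤ M = k) {c : ℕ} (hc : 0 < c) (h : (disc B : ℝ) * 4 ^ k <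
      (c : ℝ) ^ k * volume.real (ball (0 : EuclideanSpace ℝ (Fin k)) 1) ^ 2) :
    ∃ x ≠ 0, B x x < c := by
  subst hk
  rw [cast_disc] at h
  obtain ⟨z, hz, hlt⟩ := exists_int_dotProduct_mulVec_lt (c := c)
    (hpos.toMatrix_map_intCast hB (finBasis ℤ M)) (by exact_mod_cast hc) (by simpa using h)
  refine ⟨(finBasis ℤ M).equivFun.symm z, (LinearEquiv.map_ne_zero_iff _).mpr hz, ?_⟩
  rw [← LinearMap.BilinForm.dotProduct_toMatrix_mulVec]
  have hcast := (Int.castRingHom ℝ).map_dotProduct z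
    (LinearMap.BilinForm.toMatrix (finBasis ℤ M) B *ᵥ z)
  have hmul : Int.castRingHom ℝ ∘ (LinearMap.BilinForm.toMatrix (finBasis ℤ M) B *ᵥ z) = _ :=
    funext ((Int.castRingHom ℝ).map_mulVec _ z)
  rw [hmul] at hcast
  rw [← Int.cast_lt (R := ℝ), Int.cast_natCast]
  exact hcast.trans_lt hlt

/-- A sublattice cut out by a linear condition mod 2 has index at most two. -/
theorem disc_le_four_mul_disc {C : IntForm N} {B : IntForm M} {f : N →ₗ[ℤ] M}
    (hf : IsIsometry C B f) (hinj : Function.Injective f) {φ : M →ₗ[ℤ] ZMod 2}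
    (hφ : LinearMap.range f = LinearMap.ker φ) (hB : 0 ≤ disc B) :
    finrank ℤ N = finrank ℤ M ∧ disc C ≤ 4 * disc B := by
  have e := φ.quotKerEquivRange.toEquiv
  rw [← hφ] at e
  have : Finite (M ⧸ LinearMap.range f) := .of_equiv _ e.symm
  have hcard : Nat.card (M ⧸ LinearMap.range f) ≤ 2 := by
    rw [Nat.card_congr e]
    exact (Finite.card_subtype_le _).trans (Nat.card_zmod 2).le
  have hrank : finrank ℤ N = finrank ℤ M :=
    (LinearEquiv.ofInjective f hinj).finrank_eq.trans ((Submodule.finiteQuotient_iff _).mp this)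
  refine ⟨hrank, ?_⟩
  rw [disc_eq_det C (finBasisOfFinrankEq ℤ N hrank),
    det_toMatrix_eq_card_quotient_sq_mul_det hf hinj (finBasis ℤ M), ← disc.eq_1]
  gcongr
  exact_mod_cast Nat.pow_le_pow_left hcard 2

end Discriminant

section ShortVectors

open MeasureTheory Metric

variable {M : Type*} [AddCommGroup M]

/-- The norm modulo two; it is additive because the cross terms `2 (x, y)` vanish. -/
def normMod2 (B : IntForm M) (hB : ∀ x y, B x y = B y x) : M →ₗ[ℤ] ZMod 2 :=
  AddMonoidHom.toIntLinearMap <| AddMonoidHom.mk' (fun x => (B x x : ZMod 2)) fun x y => by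
    have h2 : (2 : ZMod 2) = 0 := rfl
    simp only [map_add, LinearMap.add_apply, hB y x, Int.cast_add]
    linear_combination (B x y : ZMod 2) * h2

variable [Module.Free ℤ M] [Module.Finite ℤ M]

theorem PosDef.exists_norm_eq_two_or_four {B : IntForm M} (hpos : PosDef B)
    (hB : ∀ x y, B x y = B y x) {k : ℕ} (hk : finrank ℤ M = k)
    (h : 4 * (disc B : ℝ) * 4 ^ k <
      6 ^ k * volume.real (ball (0 : EuclideanSpace ℝ (Fin k)) 1) ^ 2) :
    ∃ x, B x x = 2 ∨ B x x = 4 := by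
  let E := LinearMap.ker (normMod2 B hB)
  have hEpos : PosDef (B.restrict E) := fun x hx => hpos x (by simpa using hx)
  obtain ⟨hrank, hdisc⟩ := disc_le_four_mul_disc (C := B.restrict E) (f := E.subtype)
    (fun _ _ => rfl) E.injective_subtype E.range_subtype (hpos.disc_pos hB).le
  have hlt : (disc (B.restrict E) : ℝ) * 4 ^ k <
      6 ^ k * volume.real (ball (0 : EuclideanSpace ℝ (Fin k)) 1) ^ 2 := by
    refine lt_of_le_of_lt ?_ h
    gcongr
    exact_mod_cast hdisc
  obtain ⟨x, hx, hx6⟩ := hEpos.exists_norm_lt (fun _ _ => hB _ _) (hrank.trans hk) (c := 6)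
    (by norm_num) (by exact_mod_cast hlt)
  have hx0 := hEpos x hx
  have heven : Even (B x x) := (ZMod.intCast_eq_zero_iff_even).mp x.2
  change B x x < 6 at hx6
  change 0 < B x x at hx0
  refine ⟨x, ?_⟩
  obtain ⟨t, ht⟩ := heven
  omega

/-- The sublattice `ℤ r ⊕ rᗮ` consists of the vectors pairing evenly with `r`. -/
theorem finrank_and_disc_restrict_ker {B : IntForm M} (hB : IsUnimodular B) (hpos : PosDef B)
    {r : M} (hr : B r r = 2) : finrank ℤ (LinearMap.ker (B r)) + 1 = finrank ℤ M ∧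
      disc (B.restrict (LinearMap.ker (B r))) ≤ 2 := by
  let K := LinearMap.ker (B r)
  let f := (LinearMap.toSpanSingleton ℤ M r).coprod K.subtype
  have hf : IsIsometry ((rankOne 2).orthSum (B.restrict K)) B f :=
    (isIsometry_toSpanSingleton hr).coprod hB.symm (fun _ _ => rfl) fun t x => by simp
  have hrf : ∀ x, B r (f x) = 2 * x.1 := fun x => by simp [f, hr, mul_comm]
  have hinj : Function.Injective f := (injective_iff_map_eq_zero f).mpr fun x hx => by
    have h1 : x.1 = 0 := by simpa [hx] using hrf x
    exact Prod.ext h1 (by simpa [f, h1] using hx)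
  have hrange : LinearMap.range f =
      LinearMap.ker ((Int.castAddHom (ZMod 2)).toIntLinearMap ∘ₗ B r) := by
    ext x
    refine ⟨?_, fun hx => ?_⟩
    · rintro ⟨y, rfl⟩
      simp [hrf, show (2 : ZMod 2) = 0 from rfl]
    · obtain ⟨t, ht⟩ := (ZMod.intCast_zmod_eq_zero_iff_dvd (B r x) 2).mp hx
      refine ⟨(t, ⟨x - t • r, ?_⟩), by simp [f]⟩
      simp [K, ht, hr, mul_comm]
  obtain ⟨hrank, hdisc⟩ := disc_le_four_mul_disc hf hinj hrange (hpos.disc_pos hB.symm).le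
  rw [finrank_prod, finrank_self] at hrank
  rw [disc_orthSum, disc_rankOne, hB.disc_eq_one hpos] at hdisc
  exact ⟨(add_comm _ _).trans hrank, by linarith⟩

/-- If the short vector has norm `2`, its orthogonal complement has discriminant at most `2` and
contains a second short vector. -/
theorem IsUnimodular.exists_norm_eq_four {B : IntForm M} (hB : IsUnimodular B) (hpos : PosDef B)
    (h3 : 3 ≤ finrank ℤ M) (h19 : finrank ℤ M ≤ 19) : ∃ x, B x x = 4 := by
  obtain ⟨r, hr | hr⟩ := hpos.exists_norm_eq_two_or_four hB.symm rfl (by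
    simpa [hB.disc_eq_one hpos] using
      four_mul_four_pow_lt_six_pow_mul_unitBall (by omega) h19)
  swap
  · exact ⟨r, hr⟩
  let K := LinearMap.ker (B r)
  obtain ⟨hrank, hdisc⟩ : finrank ℤ K + 1 = finrank ℤ M ∧ disc (B.restrict K) ≤ 2 :=
    finrank_and_disc_restrict_ker hB hpos hr
  have hKpos : PosDef (B.restrict K) := fun x hx => hpos x (by simpa using hx)
  obtain ⟨s, hs | hs⟩ := hKpos.exists_norm_eq_two_or_four (fun _ _ => hB.symm _ _) rfl (by
    refine lt_of_le_of_lt ?_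
      (eight_mul_four_pow_lt_six_pow_mul_unitBall (n := finrank ℤ K) (by omega) (by omega))
    have : (disc (B.restrict K) : ℝ) ≤ 2 := by exact_mod_cast hdisc
    gcongr
    linarith)
  · change B s s = 2 at hs
    have hrs : B r s = 0 := s.2
    exact ⟨r + s, by simp [hr, hs, hrs, hB.symm s r]⟩
  · exact ⟨s, hs⟩

theorem IsUnimodular.exists_norm_eq_sq {B : IntForm M} (hB : IsUnimodular B) (hpos : PosDef B)
    (h1 : 1 ≤ finrank ℤ M) (h19 : finrank ℤ M ≤ 19) : ∃ (n : ℤ) (y : M), n ≠ 0 ∧ B y y = n ^ 2 := by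
  by_cases h3 : 3 ≤ finrank ℤ M
  · obtain ⟨y, hy⟩ := hB.exists_norm_eq_four hpos h3 h19
    exact ⟨2, y, by norm_num, hy⟩
  · obtain ⟨y, hy, hlt⟩ := hpos.exists_norm_lt hB.symm rfl (c := 2) (by norm_num) (by
      simpa [hB.disc_eq_one hpos] using four_pow_lt_two_pow_mul_unitBall h1 (by omega))
    have := hpos y hy
    exact ⟨1, y, one_ne_zero, by push_cast at hlt; omega⟩

end ShortVectors

section OddPlane

variable {M N K : Type*} [AddCommGroup M] [AddCommGroup N] [AddCommGroup K]

theorem Isometric.orthSum_left_comm (B : IntForm M) (C : IntForm N) (D : IntForm K) :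
    Isometric (B.orthSum (C.orthSum D)) (C.orthSum (B.orthSum D)) :=
  (orthSum_assoc B C D).symm.trans (((orthSum_comm B C).orthSum (.refl D)).trans
    (orthSum_assoc C B D))

theorem isometric_oddPlane_orthSum_pi_fin {k : ℕ} (hk : k ≤ 19) {B C : IntForm (Fin k → ℤ)}
    (hB : IsUnimodular B) (hBpos : PosDef B) (hC : IsUnimodular C) (hCpos : PosDef C) :
    Isometric (oddPlane.orthSum B) (oddPlane.orthSum C) := by
  induction k with
  | zero =>
    obtain rfl : B = C := LinearMap.ext₂ fun x y => by
      rw [Subsingleton.elim x 0, map_zero, map_zero]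
    exact .refl _
  | succ k ih =>
    have split : ∀ {D : IntForm (Fin (k + 1) → ℤ)}, IsUnimodular D → PosDef D →
        ∃ D' : IntForm (Fin k → ℤ), IsUnimodular D' ∧ PosDef D' ∧
          Isometric (oddPlane.orthSum D) ((rankOne 1).orthSum (oddPlane.orthSum D')) :=
        fun hD hDpos => by
      have hrank := finrank_fin_fun ℤ (n := k + 1)
      obtain ⟨n, y, hn, hy⟩ := hD.exists_norm_eq_sq hDpos (by omega) (by omega)
      obtain ⟨D', hD', hDpos', h⟩ :=
        exists_isometric_oddPlane_orthSum_rankOne hD hDpos hrank hn hy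
      exact ⟨D', hD', hDpos', h.trans (.orthSum_left_comm _ _ _)⟩
    obtain ⟨B', hB', hBpos', hBB'⟩ := split hB hBpos
    obtain ⟨C', hC', hCpos', hCC'⟩ := split hC hCpos
    exact hBB'.trans (((Isometric.refl _).orthSum
      (ih (by omega) hB' hBpos' hC' hCpos')).trans hCC'.symm)

theorem isometric_oddPlane_orthSum [Module.Free ℤ M] [Module.Finite ℤ M] [Module.Free ℤ N]
    [Module.Finite ℤ N] {B : IntForm M} {C : IntForm N} (hB : IsUnimodular B) (hBpos : PosDef B)
    (hC : IsUnimodular C) (hCpos : PosDef C) (hrank : finrank ℤ M = finrank ℤ N)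
    (h19 : finrank ℤ N ≤ 19) : Isometric (oddPlane.orthSum B) (oddPlane.orthSum C) := by
  obtain ⟨B', hBB'⟩ := exists_isometric_pi_fin B hrank
  obtain ⟨C', hCC'⟩ := exists_isometric_pi_fin C rfl
  exact ((Isometric.refl _).orthSum hBB').trans ((isometric_oddPlane_orthSum_pi_fin h19
    (hBB'.isUnimodular hB) (hBB'.posDef hBpos) (hCC'.isUnimodular hC) (hCC'.posDef hCpos)).trans
    ((Isometric.refl _).orthSum hCC'.symm))

end OddPlane

section EvenPart

variable {M N : Type*} [AddCommGroup M] [AddCommGroup N]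

/-- The embedding of `hypPlane ⊕ B` into `oddPlane ⊕ B` that doubles all lengths. For even `B` it
identifies `hypPlane ⊕ B` with an even neighbour of the odd lattice `oddPlane ⊕ B`: the one
determined by the characteristic isotropic vector `((1, 1), 0)`. -/
def evenEmb (M : Type*) [AddCommGroup M] : (ℤ × ℤ) × M →ₗ[ℤ] (ℤ × ℤ) × M where
  toFun x := ((x.1.1 - 2 * x.1.2, x.1.1 + 2 * x.1.2), (2 : ℤ) • x.2)
  map_add' x y := by ext <;> simp <;> ring
  map_smul' c x := by ext <;> simp [smul_smul, mul_comm c 2] <;> ring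

theorem evenEmb_apply (x : (ℤ × ℤ) × M) :
    evenEmb M x = ((x.1.1 - 2 * x.1.2, x.1.1 + 2 * x.1.2), (2 : ℤ) • x.2) := rfl

theorem evenEmb_eq_smul_add (x : (ℤ × ℤ) × M) :
    evenEmb M x = x.1.1 • ((1, 1), 0) + (2 : ℤ) • ((-x.1.2, x.1.2), x.2) := by
  ext <;> simp [evenEmb_apply, sub_eq_add_neg]

theorem oddPlane_orthSum_evenEmb (B : IntForm M) (x y : (ℤ × ℤ) × M) :
    (oddPlane.orthSum B) (evenEmb M x) (evenEmb M y) = 4 * (hypPlane.orthSum B) x y := by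
  simp [evenEmb_apply]
  ring

theorem evenEmb_injective [Module.Free ℤ M] : Function.Injective (evenEmb M) := by
  refine (injective_iff_map_eq_zero _).mpr fun ⟨⟨s, t⟩, l⟩ h => ?_
  simp only [evenEmb_apply, Prod.mk_eq_zero, smul_eq_zero, OfNat.ofNat_ne_zero, false_or] at h
  obtain ⟨⟨h1, h2⟩, rfl⟩ := h
  simp only [Prod.mk_eq_zero, and_true]
  omega

theorem mem_range_evenEmb {p q : ℤ} {l : M} (hpq : 4 ∣ q - p) :
    ((p, q), (2 : ℤ) • l) ∈ LinearMap.range (evenEmb M) := by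
  obtain ⟨t, ht⟩ := hpq
  refine ⟨((p + 2 * t, t), l), ?_⟩
  rw [evenEmb_apply]
  ext
  · simp
  · simp only
    linarith
  · rfl

theorem two_smul_mem_range_evenEmb {B : IntForm M} (hB : IsEven B) {x : (ℤ × ℤ) × M}
    (hx : Even ((oddPlane.orthSum B) x x)) : (2 : ℤ) • x ∈ LinearMap.range (evenEmb M) := by
  obtain ⟨⟨p, q⟩, l⟩ := x
  refine mem_range_evenEmb ?_
  have h : Even (q - p) := by
    have := hB l
    simp_all [Int.even_add, Int.even_sub, Int.even_mul, iff_comm]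
  obtain ⟨t, ht⟩ := h
  exact ⟨t, show 2 * q - 2 * p = 4 * t by linarith⟩

/-- The image of the characteristic vector `((1, 1), 0)` is again characteristic, hence of the form
`((odd, odd), 2 l)`; changing one sign makes the odd entries congruent mod 4. -/
theorem exists_isometry_characteristic_mem_range {B : IntForm M} {C : IntForm N}
    (hB : IsEven B) (hC : IsUnimodular C) (hCe : IsEven C)
    (h : Isometric (oddPlane.orthSum B) (oddPlane.orthSum C)) :
    ∃ e : ((ℤ × ℤ) × M) ≃ₗ[ℤ] (ℤ × ℤ) × N,
      (∀ x y, (oddPlane.orthSum C) (e x) (e y) = (oddPlane.orthSum B) x y) ∧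
      e ((1, 1), 0) ∈ LinearMap.range (evenEmb N) := by
  obtain ⟨e, he⟩ : ∃ e : ((ℤ × ℤ) × M) ≃ₗ[ℤ] (ℤ × ℤ) × N, ∀ x y,
    (oddPlane.orthSum C) (e x) (e y) = (oddPlane.orthSum B) x y := h
  obtain ⟨⟨⟨p, q⟩, d⟩, hd⟩ : ∃ w, e ((1, 1), 0) = w := ⟨_, rfl⟩
  have hchar : ∀ y, Even ((oddPlane.orthSum C) y y - (oddPlane.orthSum C) ((p, q), d) y) := by
    intro y
    obtain ⟨x, rfl⟩ := e.surjective y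
    have := hB x.2
    rw [← hd, he, he]
    simp_all [Int.even_add, Int.even_sub, Int.even_mul]
  have hp : Odd p := by simpa [Int.even_sub, ← Int.not_even_iff_odd] using hchar ((1, 0), 0)
  have hq : Odd q := by
    simpa [Int.even_sub, Int.even_add, ← Int.not_even_iff_odd] using hchar ((0, 1), 0)
  obtain ⟨l, rfl⟩ := hC.exists_eq_smul_of_forall_dvd two_ne_zero (w := d) fun y =>
    even_iff_two_dvd.mp (by simpa [Int.even_sub, hCe y] using hchar ((0, 0), y))
  obtain h4 | h4 : 4 ∣ q - p ∨ 4 ∣ -q - p := by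
    obtain ⟨a, rfl⟩ := hp
    obtain ⟨b, rfl⟩ := hq
    omega
  · exact ⟨e, he, hd ▸ mem_range_evenEmb h4⟩
  · let σ : ((ℤ × ℤ) × N) ≃ₗ[ℤ] (ℤ × ℤ) × N :=
      ((LinearEquiv.refl ℤ ℤ).prodCongr (LinearEquiv.neg ℤ)).prodCongr (.refl ℤ N)
    refine ⟨e.trans σ, fun x y => ?_, ?_⟩
    · rw [← he]
      simp [σ]
    · have : σ (e ((1, 1), 0)) = ((p, -q), (2 : ℤ) • l) := by simp [hd, σ]
      exact this ▸ mem_range_evenEmb h4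

theorem isometric_hypPlane_orthSum_of_oddPlane [Module.Free ℤ M] [Module.Finite ℤ M]
    [Module.Free ℤ N] [Module.Finite ℤ N] {B : IntForm M} {C : IntForm N} (hB : IsUnimodular B)
    (hBe : IsEven B) (hC : IsUnimodular C) (hCe : IsEven C)
    (h : Isometric (oddPlane.orthSum B) (oddPlane.orthSum C)) :
    Isometric (hypPlane.orthSum B) (hypPlane.orthSum C) := by
  obtain ⟨e, he, hc⟩ := exists_isometry_characteristic_mem_range hBe hC hCe h
  have hmem : ∀ x, e (evenEmb M x) ∈ LinearMap.range (evenEmb N) := by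
    intro x
    rw [evenEmb_eq_smul_add, map_add, map_smul, map_smul]
    refine add_mem (Submodule.smul_mem _ _ hc) (two_smul_mem_range_evenEmb hCe ?_)
    rw [he]
    simpa using hBe x.2
  let i := LinearEquiv.ofInjective (evenEmb N) evenEmb_injective
  let f := i.symm.toLinearMap ∘ₗ (e.toLinearMap ∘ₗ evenEmb M).codRestrict _ hmem
  have hf : ∀ x, evenEmb N (f x) = e (evenEmb M x) := fun x =>
    congrArg Subtype.val (i.apply_symm_apply _)
  refine Isometric.of_isIsometry (isUnimodular_hypPlane.orthSum hC).symm
    (isUnimodular_hypPlane.orthSum hB) (h := f) (fun x y => ?_) e.finrank_eq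
  have := oddPlane_orthSum_evenEmb C (f x) (f y)
  rw [hf, hf, he, oddPlane_orthSum_evenEmb] at this
  linarith

end EvenPart

section E8

variable {M N ι : Type*} [AddCommGroup M] [AddCommGroup N] [Fintype ι] [DecidableEq ι]

theorem isUnimodular_toBilin' {G : Matrix ι ι ℤ} (hG : G.IsSymm) (hdet : IsUnit G.det) :
    IsUnimodular G.toBilin' := by
  have hsymm : ∀ x y, G.toBilin' x y = G.toBilin' y x := fun x y => by
    rw [toBilin'_apply', toBilin'_apply', dotProduct_mulVec, ← mulVec_transpose, hG.eq,
      dotProduct_comm]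
  rwa [isUnimodular_iff_isUnit_det hsymm (Pi.basisFun ℤ ι), LinearMap.BilinForm.toMatrix_basisFun,
    LinearMap.BilinForm.toMatrix'_toBilin']

theorem IsUnimodular.posDef_of_nonneg {B : IntForm M} (hB : IsUnimodular B)
    (hnonneg : ∀ x, 0 ≤ B x x) : PosDef B := by
  intro x hx
  refine (hnonneg x).lt_of_ne' fun h0 => hx ?_
  have hker := (B.apply_apply_same_eq_zero_iff hnonneg ⟨hB.symm⟩).mp h0
  exact (map_eq_zero_iff B hB.bijective.injective).mp hker

theorem IsEven.orthSum {B : IntForm M} {C : IntForm N} (hB : IsEven B) (hC : IsEven C) :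
    IsEven (B.orthSum C) := fun x => (hB x.1).add (hC x.2)

/-- The positive definite `E₈` form, in the basis of simple roots. -/
def e8 : IntForm (Fin 8 → ℤ) := (-E8Mat).toBilin'

/-- The fundamental weights of `E₈` in the basis of simple roots: the rows of the inverse Gram
matrix. -/
def e8Weight : Fin 8 → Fin 8 → ℤ :=
  ![![4, 5, 7, 10, 8, 6, 4, 2],
    ![5, 8, 10, 15, 12, 9, 6, 3],
    ![7, 10, 14, 20, 16, 12, 8, 4],
    ![10, 15, 20, 30, 24, 18, 12, 6],
    ![8, 12, 16, 24, 20, 15, 10, 5],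
    ![6, 9, 12, 18, 15, 12, 8, 4],
    ![4, 6, 8, 12, 10, 8, 6, 3],
    ![2, 3, 4, 6, 5, 4, 3, 2]]

theorem neg_e8Mat_mul_e8Weight : -E8Mat * of e8Weight = 1 := by decide +kernel

theorem e8Weight_symm (i j : Fin 8) : e8Weight i j = e8Weight j i := by
  decide +revert +kernel

theorem e8_apply (x y : Fin 8 → ℤ) : e8 x y = x ⬝ᵥ -E8Mat *ᵥ y := toBilin'_apply' _ _ _

theorem isUnimodular_e8 : IsUnimodular e8 :=
  isUnimodular_toBilin' (by decide +kernel)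
    (IsUnit.of_mul_eq_one _ (by rw [← det_mul, neg_e8Mat_mul_e8Weight, det_one]))

theorem isEven_e8 : IsEven e8 := fun x => by
  refine ⟨x 0 * (x 0 - x 2) + x 1 * (x 1 - x 3) + x 2 * (x 2 - x 3) + x 3 * (x 3 - x 4) +
    x 4 * (x 4 - x 5) + x 5 * (x 5 - x 6) + x 6 * (x 6 - x 7) + x 7 * x 7, ?_⟩
  simp [e8_apply, E8Mat, dotProduct, mulVec, Fin.sum_univ_eight]
  ring

theorem sixty_mul_e8_self (x : Fin 8 → ℤ) : 60 * e8 x x =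
    30 * (2 * x 0 - x 2) ^ 2 + 30 * (2 * x 1 - x 3) ^ 2 + 10 * (3 * x 2 - 2 * x 3) ^ 2 +
      2 * (5 * x 3 - 6 * x 4) ^ 2 + 3 * (4 * x 4 - 5 * x 5) ^ 2 + 5 * (3 * x 5 - 4 * x 6) ^ 2 +
      10 * (2 * x 6 - 3 * x 7) ^ 2 + 30 * x 7 ^ 2 := by
  simp [e8_apply, E8Mat, dotProduct, mulVec, Fin.sum_univ_eight]
  ring

theorem posDef_e8 : PosDef e8 := isUnimodular_e8.posDef_of_nonneg fun x => by
  have h : 0 ≤ 60 * e8 x x := sixty_mul_e8_self x ▸ by positivity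
  exact nonneg_of_mul_nonneg_right h (by norm_num)

theorem e8_weight (a : Fin 8 → ℤ) (i : Fin 8) : e8 a (e8Weight i) = a i := by
  have h : e8Weight i = of e8Weight *ᵥ Pi.single i 1 := by
    rw [mulVec_single_one]
    exact funext (e8Weight_symm i)
  rw [e8_apply, h, mulVec_mulVec, neg_e8Mat_mul_e8Weight, one_mulVec, dotProduct_single_one]

theorem e8_eq_sum (a x : Fin 8 → ℤ) : e8 a x = ∑ i, x i * e8 a (Pi.single i 1) := by
  simpa [-zsmul_eq_mul] using congrArg (e8 a) ((Pi.basisFun ℤ (Fin 8)).sum_repr x).symm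

theorem eq_sum_e8Weight (a : Fin 8 → ℤ) (j : Fin 8) :
    a j = ∑ i, e8Weight j i * e8 a (Pi.single i 1) :=
  (e8_weight a j).symm.trans (e8_eq_sum a _)

theorem apply_seven_nonneg {a : Fin 8 → ℤ} (ha : ∀ i, 0 ≤ e8 a (Pi.single i 1)) : 0 ≤ a 7 := by
  rw [eq_sum_e8Weight a]
  exact Finset.sum_nonneg fun i _ => mul_nonneg (by decide +revert) (ha i)

/-- In terms of the labels `cᵢ` of a dominant vector, the difference of the two sides is a quadratic
form with nonnegative coefficients. -/
theorem e8_self_add_sum_sq_le {a : Fin 8 → ℤ} (ha : ∀ i, 0 ≤ e8 a (Pi.single i 1)) :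
    e8 a a + ∑ i ∈ {0}ᶜ, e8 a (Pi.single i 1) ^ 2 ≤ a 7 ^ 2 := by
  have hsq : ∑ i ∈ {0}ᶜ, e8 a (Pi.single i 1) ^ 2 = ∑ i, ∑ j,
      (if i = j ∧ i ≠ 0 then 1 else 0) * (e8 a (Pi.single i 1) * e8 a (Pi.single j 1)) := by
    have hfilter : ({0}ᶜ : Finset (Fin 8)) = Finset.univ.filter (· ≠ 0) := by ext; simp
    simp [hfilter, Finset.sum_filter, ite_and, sq]
  have hself : e8 a a = ∑ i, ∑ j,
      e8Weight i j * (e8 a (Pi.single i 1) * e8 a (Pi.single j 1)) := by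
    rw [e8_eq_sum]
    refine Finset.sum_congr rfl fun i _ => ?_
    rw [eq_sum_e8Weight a i, Finset.sum_mul]
    exact Finset.sum_congr rfl fun j _ => by ring
  have h7 : a 7 ^ 2 = ∑ i, ∑ j,
      e8Weight 7 i * e8Weight 7 j * (e8 a (Pi.single i 1) * e8 a (Pi.single j 1)) := by
    rw [eq_sum_e8Weight a 7, sq, Finset.sum_mul_sum]
    exact Finset.sum_congr rfl fun i _ => Finset.sum_congr rfl fun j _ => by ring
  have hcoeff : ∀ i j, e8Weight i j + (if i = j ∧ i ≠ 0 then 1 else 0) ≤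
      e8Weight 7 i * e8Weight 7 j := by decide +kernel
  rw [hsq, hself, h7, ← Finset.sum_add_distrib]
  refine Finset.sum_le_sum fun i _ => ?_
  rw [← Finset.sum_add_distrib]
  refine Finset.sum_le_sum fun j _ => ?_
  rw [← add_mul]
  exact mul_le_mul_of_nonneg_right (hcoeff i j) (mul_nonneg (ha i) (ha j))

theorem eq_smul_e8Weight_zero {a : Fin 8 → ℤ}
    (ha : ∑ i ∈ {0}ᶜ, e8 a (Pi.single i 1) ^ 2 ≤ 0) :
    a = e8 a (Pi.single 0 1) • e8Weight 0 := by
  have h0 : ∀ i ≠ 0, e8 a (Pi.single i 1) = 0 := fun i hi => by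
    have := (Finset.sum_eq_zero_iff_of_nonneg fun i _ => sq_nonneg (e8 a (Pi.single i 1))).mp
      (ha.antisymm (Finset.sum_nonneg fun i _ => sq_nonneg _)) i (by simpa using hi)
    exact pow_eq_zero_iff two_ne_zero |>.mp this
  ext j
  rw [eq_sum_e8Weight a j, Finset.sum_eq_single 0 (fun i _ hi => by rw [h0 i hi, mul_zero])
    (by simp), e8Weight_symm j 0, Pi.smul_apply, smul_eq_mul, mul_comm]

end E8

section Vinberg

variable {M : Type*} [AddCommGroup M]

/-- The closed future cone of the Lorentzian lattice `hypPlane ⊕ C`, for positive definite `C`. -/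
def IsForward (C : IntForm M) (x : (ℤ × ℤ) × M) : Prop :=
  0 ≤ x.1.1 ∧ 0 ≤ x.1.2 ∧ (hypPlane.orthSum C) x x ≤ 0

/-- The chamber conditions cut out by the roots (vectors of norm `2`) that are positive on `w`. In
the application `w` is a Weyl vector. -/
def IsDominant (B : IntForm M) (w x : M) : Prop :=
  ∀ r, B r r = 2 → 0 < B r w → 0 ≤ B r x

theorem IsForward.apply_nonpos {C : IntForm M} (hC : PosDef C) (hsymm : ∀ x y, C x y = C y x)
    {x y : (ℤ × ℤ) × M} (hx : IsForward C x) (hy : IsForward C y) :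
    (hypPlane.orthSum C) x y ≤ 0 := by
  obtain ⟨hx1, hx2, hxx⟩ := hx
  obtain ⟨hy1, hy2, hyy⟩ := hy
  simp only [orthSum_apply, hypPlane_apply] at hxx hyy ⊢
  have hcauchy : C x.2 y.2 ^ 2 ≤ (x.1.1 * y.1.2 + x.1.2 * y.1.1) ^ 2 := calc
    C x.2 y.2 ^ 2 ≤ C x.2 x.2 * C y.2 y.2 := C.apply_sq_le_of_symm hC.nonneg ⟨hsymm⟩ _ _
    _ ≤ (2 * (x.1.1 * x.1.2)) * (2 * (y.1.1 * y.1.2)) :=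
      mul_le_mul (by linarith) (by linarith) (hC.nonneg _) (by positivity)
    _ ≤ (x.1.1 * y.1.2 + x.1.2 * y.1.1) ^ 2 := by
      linarith [sq_nonneg (x.1.1 * y.1.2 - x.1.2 * y.1.1)]
  linarith [(abs_le_of_sq_le_sq' hcauchy (by positivity)).2]

theorem isForward_or_isForward_neg {C : IntForm M} (hC : PosDef C) {x : (ℤ × ℤ) × M}
    (hx : (hypPlane.orthSum C) x x ≤ 0) : IsForward C x ∨ IsForward C (-x) := by
  have hmul : 0 ≤ x.1.1 * x.1.2 := by
    have := hC.nonneg x.2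
    simp only [orthSum_apply, hypPlane_apply] at hx
    linarith
  rcases mul_nonneg_iff.mp hmul with ⟨h1, h2⟩ | ⟨h1, h2⟩
  · exact .inl ⟨h1, h2, hx⟩
  · exact .inr ⟨neg_nonneg.mpr h1, neg_nonneg.mpr h2, by
      rwa [map_neg, map_neg, LinearMap.neg_apply, neg_neg]⟩

theorem isIsometry_reflection {B : IntForm M} (hB : ∀ x y, B x y = B y x) {r : M}
    (hr : B r r = 2) : IsIsometry B B (reflection hr) := fun x y => by
  simp [reflection_apply, hr, hB x r]
  ring

/-- A reflected isotropic vector pairs nonpositively with the original one, so it cannot lie in the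
past cone. -/
theorem IsForward.reflection {C : IntForm M} (hC : PosDef C) (hsymm : ∀ x y, C x y = C y x)
    {x r : (ℤ × ℤ) × M} (hx : IsForward C x) (hxx : (hypPlane.orthSum C) x x = 0)
    (hr : (hypPlane.orthSum C) r r = 2) : IsForward C (Module.reflection hr x) := by
  have hV := orthSum_symm isUnimodular_hypPlane.symm hsymm
  have hyy := (isIsometry_reflection hV hr x x).trans_le hxx.le
  refine (isForward_or_isForward_neg hC hyy).elim id fun hneg => ?_
  have hpair : (hypPlane.orthSum C) x (-Module.reflection hr x) = (hypPlane.orthSum C) r x ^ 2 := by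
    rw [reflection_apply, map_neg, map_sub, map_smul, hxx, hV x r, smul_eq_mul]
    ring
  have h0 : (hypPlane.orthSum C) r x = 0 := pow_eq_zero_iff two_ne_zero |>.mp
    ((hpair ▸ hx.apply_nonpos hC hsymm hneg).antisymm (sq_nonneg _))
  rwa [reflection_apply, h0, zero_smul, sub_zero]

/-- The height `-⟨w, x⟩` is nonnegative on forward vectors, and reflecting in a root that violates
dominance lowers it. -/
theorem exists_isDominant {C : IntForm M} (hC : PosDef C) (hsymm : ∀ x y, C x y = C y x)
    {w : (ℤ × ℤ) × M} (hw : IsForward C w) {x : (ℤ × ℤ) × M}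
    (hxx : (hypPlane.orthSum C) x x = 0) :
    ∃ g : ((ℤ × ℤ) × M) ≃ₗ[ℤ] (ℤ × ℤ) × M,
      (∀ x y, (hypPlane.orthSum C) (g x) (g y) = (hypPlane.orthSum C) x y) ∧
      IsForward C (g x) ∧ IsDominant (hypPlane.orthSum C) w (g x) := by
  wlog hx : IsForward C x generalizing x
  · obtain ⟨g, hg, hgx⟩ := this (x := -x)
      (by rwa [map_neg, map_neg, LinearMap.neg_apply, neg_neg])
      ((isForward_or_isForward_neg hC hxx.le).resolve_left hx)
    exact ⟨(LinearEquiv.neg ℤ).trans g, fun x y => (hg (-x) (-y)).trans (by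
      simp only [map_neg, LinearMap.neg_apply, neg_neg]), hgx⟩
  induction h : (-(hypPlane.orthSum C) x w).toNat using Nat.strong_induction_on generalizing x with
  | _ k ih =>
  by_cases hdom : IsDominant (hypPlane.orthSum C) w x
  · exact ⟨.refl ℤ _, fun _ _ => rfl, hx, hdom⟩
  simp only [IsDominant, not_forall, not_le] at hdom
  obtain ⟨r, hr, hrw, hrx⟩ := hdom
  have hV := orthSum_symm isUnimodular_hypPlane.symm hsymm
  have hs : ∀ x y, _ := isIsometry_reflection hV hr
  have hy := hx.reflection hC hsymm hxx hr
  have hlt : (hypPlane.orthSum C) x w < (hypPlane.orthSum C) (reflection hr x) w := by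
    rw [reflection_apply, map_sub, map_smul, LinearMap.sub_apply, LinearMap.smul_apply, smul_eq_mul]
    linarith [mul_neg_of_neg_of_pos hrx hrw]
  have hnonpos := hy.apply_nonpos hC hsymm hw
  obtain ⟨g, hg, hgx⟩ := ih _ (by omega) (x := reflection hr x) ((hs x x).trans hxx) hy rfl
  exact ⟨(reflection hr).trans g, fun x y => (hg _ _).trans (hs x y), hgx⟩

/-- A Weyl vector of `U ⊕ E₈ ⊕ E₈`: it pairs to `1` with each of Vinberg's `19` simple roots. -/
def weylVector : (ℤ × ℤ) × (Fin 8 → ℤ) × (Fin 8 → ℤ) :=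
  ((30, 31), ∑ i, e8Weight i, ∑ i, e8Weight i)

theorem isForward_weylVector : IsForward (e8.orthSum e8) weylVector := by
  refine ⟨by decide, by decide, ?_⟩
  simp only [orthSum_apply, hypPlane_apply, weylVector, map_sum, LinearMap.sum_apply, e8_weight]
  decide +kernel

/-- The dominance conditions are used for the simple roots only: the two `E₈` diagrams, their affine
nodes and the root `((-1, 1), 0)` joining these. -/
theorem IsDominant.simpleRoot_inequalities {x : (ℤ × ℤ) × (Fin 8 → ℤ) × (Fin 8 → ℤ)}
    (hx : IsDominant (hypPlane.orthSum (e8.orthSum e8)) weylVector x) :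
    (∀ i, 0 ≤ e8 x.2.1 (Pi.single i 1)) ∧ (∀ i, 0 ≤ e8 x.2.2 (Pi.single i 1)) ∧
      x.2.1 7 ≤ x.1.1 ∧ x.2.2 7 ≤ x.1.1 ∧ x.1.1 ≤ x.1.2 := by
  have hsingle : ∀ i, e8 (Pi.single i 1) (Pi.single i 1) = 2 := by
    simp only [e8, toBilin'_single]
    decide
  have h77 : e8Weight 7 7 = 2 := by decide
  have htheta : ∑ i, e8Weight 7 i = 29 := by decide
  refine ⟨fun i => ?_, fun i => ?_, ?_, ?_, ?_⟩
  · have := hx (0, Pi.single i 1, 0) (by simp [hsingle]) (by simp [weylVector, e8_weight])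
    simpa [isUnimodular_e8.symm x.2.1] using this
  · have := hx (0, 0, Pi.single i 1) (by simp [hsingle]) (by simp [weylVector, e8_weight])
    simpa [isUnimodular_e8.symm x.2.2] using this
  · have := hx ((0, -1), -e8Weight 7, 0) (by simp [e8_weight, h77])
      (by simp [weylVector, e8_weight, htheta])
    simpa [isUnimodular_e8.symm (e8Weight 7), e8_weight] using this
  · have := hx ((0, -1), 0, -e8Weight 7) (by simp [e8_weight, h77])
      (by simp [weylVector, e8_weight, htheta])
    simpa [isUnimodular_e8.symm (e8Weight 7), e8_weight] using this
  · have := hx ((-1, 1), 0) (by simp) (by simp [weylVector])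
    simpa using this

/-- Combining the bounds for the two `E₈` components with `xᵢ ≤ m ≤ n` forces equality
throughout. -/
theorem eq_of_isForward_of_isDominant {x : (ℤ × ℤ) × (Fin 8 → ℤ) × (Fin 8 → ℤ)}
    (hxx : (hypPlane.orthSum (e8.orthSum e8)) x x = 0) (hfwd : IsForward (e8.orthSum e8) x)
    (hdom : IsDominant (hypPlane.orthSum (e8.orthSum e8)) weylVector x) :
    (∃ n, x = ((0, n), 0)) ∨ ∃ c : ℤ, x = c • ((2, 2), e8Weight 0, e8Weight 0) := by
  obtain ⟨⟨m, n⟩, a, b⟩ := x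
  obtain ⟨ha, hb, ham, hbm, hmn⟩ := hdom.simpleRoot_inequalities
  have hm : 0 ≤ m := hfwd.1
  simp only [orthSum_apply, hypPlane_apply] at ha hb ham hbm hmn hxx
  have ha7 := apply_seven_nonneg ha
  have hb7 := apply_seven_nonneg hb
  have hale := e8_self_add_sum_sq_le ha
  have hble := e8_self_add_sum_sq_le hb
  have hSa := Finset.sum_nonneg fun i (_ : i ∈ ({0}ᶜ : Finset (Fin 8))) =>
    sq_nonneg (e8 a (Pi.single i 1))
  have hSb := Finset.sum_nonneg fun i (_ : i ∈ ({0}ᶜ : Finset (Fin 8))) =>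
    sq_nonneg (e8 b (Pi.single i 1))
  have hasq : a 7 ^ 2 ≤ m ^ 2 := pow_le_pow_left₀ ha7 ham 2
  have hbsq : b 7 ^ 2 ≤ m ^ 2 := pow_le_pow_left₀ hb7 hbm 2
  have hmmn : m ^ 2 ≤ m * n := sq m ▸ mul_le_mul_of_nonneg_left hmn hm
  obtain ⟨c, hac⟩ : ∃ c : ℤ, a = c • e8Weight 0 := ⟨_, eq_smul_e8Weight_zero (by linarith)⟩
  obtain ⟨d, hbd⟩ : ∃ d : ℤ, b = d • e8Weight 0 := ⟨_, eq_smul_e8Weight_zero (by linarith)⟩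
  have ham' : a 7 = m := (sq_eq_sq₀ ha7 hm).mp (by linarith)
  have hbm' : b 7 = m := (sq_eq_sq₀ hb7 hm).mp (by linarith)
  have hmc : m = c * 2 := ham' ▸ congrFun hac 7
  have hmd : m = d * 2 := hbm' ▸ congrFun hbd 7
  obtain rfl : d = c := by omega
  rcases hm.eq_or_lt with rfl | hm0
  · have hd : d = 0 := by omega
    refine .inl ⟨n, ?_⟩
    rw [hac, hbd, hd, zero_smul]
    rfl
  · have hnm : m = n := mul_left_cancel₀ hm0.ne' (by linarith)
    refine .inr ⟨d, ?_⟩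
    rw [hac, hbd, ← hnm, hmd]
    rfl

end Vinberg

section Classification

variable {M N K ι : Type*} [AddCommGroup M] [AddCommGroup N] [AddCommGroup K] [Fintype ι]
  [DecidableEq ι]

/-- The lattice `B` is `w^⊥ / w` for the isotropic vector `w` of `hypPlane ⊕ B`, so a unimodular
lattice of the same rank orthogonal to `w` maps isomorphically onto it. -/
theorem isometric_of_orthogonal_isotropic [Module.Free ℤ M] [Module.Finite ℤ M] [Module.Free ℤ N]
    [Module.Finite ℤ N] {B : IntForm M} {C : IntForm N} {V : IntForm K}
    {f : ((ℤ × ℤ) × M) ≃ₗ[ℤ] K} {h : N →ₗ[ℤ] K} (hB : ∀ x y, B x y = B y x)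
    (hC : IsUnimodular C) (hrank : finrank ℤ N = finrank ℤ M)
    (hf : ∀ x y, V (f x) (f y) = (hypPlane.orthSum B) x y) (hh : IsIsometry C V h)
    (horth : ∀ y, V (f ((1, 0), 0)) (h y) = 0) : Isometric C B := by
  have h0 (y : N) : (f.symm (h y)).1.2 = 0 := by
    have h1 := hf ((1, 0), 0) (f.symm (h y))
    rw [f.apply_symm_apply, horth] at h1
    simpa using h1.symm
  refine .of_isIsometry hB hC (h := .snd ℤ (ℤ × ℤ) M ∘ₗ f.symm.toLinearMap ∘ₗ h)
    (fun x y => ?_) hrank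
  have hxy : (hypPlane.orthSum B) (f.symm (h x)) (f.symm (h y)) = C x y := by
    rw [← hf, f.apply_symm_apply, f.apply_symm_apply, hh]
  simpa [h0] using hxy

theorem isIsometry_linearCombination {B : IntForm M} {G : Matrix ι ι ℤ} {v : ι → M}
    (hv : ∀ i j, B (v i) (v j) = G i j) :
    IsIsometry G.toBilin' B (Fintype.linearCombination ℤ v) := by
  have h : B.comp (Fintype.linearCombination ℤ v) (Fintype.linearCombination ℤ v) = G.toBilin' := by
    refine LinearMap.BilinForm.ext_basis (Pi.basisFun ℤ ι) fun i j => ?_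
    simp [hv]
  exact fun x y => LinearMap.congr_fun₂ h x y

/-- A basis of `D₁₆⁺` inside `U ⊕ E₈ ⊕ E₈`: vectors orthogonal to the isotropic vector
`((2, 2), e8Weight 0, e8Weight 0)` whose Gram matrix is `D16Mat`. -/
def d16Vec : Fin 16 → (ℤ × ℤ) × (Fin 8 → ℤ) × (Fin 8 → ℤ) :=
  ![((1, 1), ![3, 2, 4, 5, 4, 3, 2, 1], ![1, 3, 3, 5, 4, 3, 2, 1]),
    (0, Pi.single 2 1, 0),
    (0, Pi.single 3 1, 0),
    (0, Pi.single 4 1, 0),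
    (0, Pi.single 5 1, 0),
    (0, Pi.single 6 1, 0),
    (0, Pi.single 7 1, 0),
    ((0, -1), -e8Weight 7, 0),
    ((-1, 1), 0),
    ((0, -1), 0, -e8Weight 7),
    (0, 0, Pi.single 7 1),
    (0, 0, Pi.single 6 1),
    (0, 0, Pi.single 5 1),
    (0, 0, Pi.single 4 1),
    (0, 0, Pi.single 3 1),
    (0, 0, Pi.single 1 1 + Pi.single 2 1)]

theorem gram_d16Vec (i j : Fin 16) :
    (hypPlane.orthSum (e8.orthSum e8)) (d16Vec i) (d16Vec j) = D16Mat i j := by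
  have h : Matrix.of (fun i j => -((d16Vec i).1.1 * (d16Vec j).1.2 +
      (d16Vec i).1.2 * (d16Vec j).1.1) + ((d16Vec i).2.1 ⬝ᵥ (-E8Mat) *ᵥ (d16Vec j).2.1 +
        (d16Vec i).2.2 ⬝ᵥ (-E8Mat) *ᵥ (d16Vec j).2.2)) = D16Mat := by decide +kernel
  simp only [orthSum_apply, hypPlane_apply, e8_apply]
  exact congrFun₂ h i j

theorem orthogonal_d16Vec (i : Fin 16) :
    (hypPlane.orthSum (e8.orthSum e8)) ((2, 2), e8Weight 0, e8Weight 0) (d16Vec i) = 0 := by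
  simp only [orthSum_apply, hypPlane_apply, e8_apply]
  decide +revert +kernel

/-- The inverse of `D16Mat`, which certifies that the determinant is a unit. -/
def d16Inv : Matrix (Fin 16) (Fin 16) ℤ :=
  !![4, -2, -4, -6, -8, -10, -12, -14, -16, -18, -20, -22, -24, -26, -28, -15;
     -2, 2, 3, 4, 5, 6, 7, 8, 9, 10, 11, 12, 13, 14, 15, 8;
     -4, 3, 6, 8, 10, 12, 14, 16, 18, 20, 22, 24, 26, 28, 30, 16;
     -6, 4, 8, 12, 15, 18, 21, 24, 27, 30, 33, 36, 39, 42, 45, 24;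
     -8, 5, 10, 15, 20, 24, 28, 32, 36, 40, 44, 48, 52, 56, 60, 32;
     -10, 6, 12, 18, 24, 30, 35, 40, 45, 50, 55, 60, 65, 70, 75, 40;
     -12, 7, 14, 21, 28, 35, 42, 48, 54, 60, 66, 72, 78, 84, 90, 48;
     -14, 8, 16, 24, 32, 40, 48, 56, 63, 70, 77, 84, 91, 98, 105, 56;
     -16, 9, 18, 27, 36, 45, 54, 63, 72, 80, 88, 96, 104, 112, 120, 64;
     -18, 10, 20, 30, 40, 50, 60, 70, 80, 90, 99, 108, 117, 126, 135, 72;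
     -20, 11, 22, 33, 44, 55, 66, 77, 88, 99, 110, 120, 130, 140, 150, 80;
     -22, 12, 24, 36, 48, 60, 72, 84, 96, 108, 120, 132, 143, 154, 165, 88;
     -24, 13, 26, 39, 52, 65, 78, 91, 104, 117, 130, 143, 156, 168, 180, 96;
     -26, 14, 28, 42, 56, 70, 84, 98, 112, 126, 140, 154, 168, 182, 195, 104;
     -28, 15, 30, 45, 60, 75, 90, 105, 120, 135, 150, 165, 180, 195, 210, 112;
     -15, 8, 16, 24, 32, 40, 48, 56, 64, 72, 80, 88, 96, 104, 112, 60]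

theorem isUnimodular_d16 : IsUnimodular D16Mat.toBilin' := by
  have hinv : D16Mat * d16Inv = 1 := by decide +kernel
  exact isUnimodular_toBilin' (by decide +kernel)
    (IsUnit.of_mul_eq_one _ (by rw [← det_mul, hinv, det_one]))

theorem isometric_e8_orthSum_e8_or_d16 [Module.Free ℤ M] [Module.Finite ℤ M] {B : IntForm M}
    (hB : IsUnimodular B) (hpos : PosDef B) (heven : IsEven B) (hrank : finrank ℤ M = 16) :
    Isometric (e8.orthSum e8) B ∨ Isometric D16Mat.toBilin' B := by
  have hEpos : PosDef (e8.orthSum e8) := posDef_e8.orthSum posDef_e8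
  have hE : IsUnimodular (e8.orthSum e8) := isUnimodular_e8.orthSum isUnimodular_e8
  have hrankE : finrank ℤ ((Fin 8 → ℤ) × (Fin 8 → ℤ)) = finrank ℤ M := by simp [hrank]
  have hodd := isometric_oddPlane_orthSum hB hpos hE hEpos hrankE.symm (by simp)
  obtain ⟨e, he⟩ := isometric_hypPlane_orthSum_of_oddPlane hB heven hE
    (isEven_e8.orthSum isEven_e8) hodd
  have hiso : (hypPlane.orthSum (e8.orthSum e8)) (e ((1, 0), 0)) (e ((1, 0), 0)) = 0 :=
    (he _ _).trans (by simp)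
  obtain ⟨g, hg, hfwd, hdom⟩ := exists_isDominant hEpos hE.symm isForward_weylVector hiso
  have hf : ∀ x y, (hypPlane.orthSum (e8.orthSum e8)) ((e.trans g) x) ((e.trans g) y) =
      (hypPlane.orthSum B) x y := fun x y => (hg _ _).trans (he x y)
  rcases eq_of_isForward_of_isDominant ((hg _ _).trans hiso) hfwd hdom with ⟨n, hn⟩ | ⟨c, hc⟩
  · refine .inl (isometric_of_orthogonal_isotropic (h := .inr ℤ _ _) hB.symm hE hrankE hf
      (fun _ _ => by simp) fun y => ?_)
    simp [hn]
  · refine .inr (isometric_of_orthogonal_isotropic hB.symm isUnimodular_d16 (by simp [hrank]) hf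
      (isIsometry_linearCombination gram_d16Vec) fun y => ?_)
    rw [LinearEquiv.trans_apply, hc, map_smul, LinearMap.smul_apply,
      Fintype.linearCombination_apply]
    simp only [map_sum, map_smul, orthogonal_d16Vec, smul_zero, Finset.sum_const_zero]

theorem isometric_e8_orthSum_e8 : Isometric (e8.orthSum e8) (dsum (-E8Mat) (-E8Mat)).toBilin' := by
  refine ⟨(LinearEquiv.sumArrowLequivProdArrow (Fin 8) (Fin 8) ℤ ℤ).symm, ?_⟩
  rintro ⟨a, b⟩ ⟨c, d⟩
  have h (a b : Fin 8 → ℤ) :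
      (LinearEquiv.sumArrowLequivProdArrow (Fin 8) (Fin 8) ℤ ℤ).symm (a, b) = Sum.elim a b := by
    ext (i | i) <;> rfl
  simp [h, e8_apply, toBilin'_apply', dsum, fromBlocks_mulVec]

theorem Isometric.isomGram {κ : Type*} [Fintype κ] [DecidableEq κ] {G : Matrix ι ι ℤ}
    {H : Matrix κ κ ℤ} (h : Isometric G.toBilin' H.toBilin') : IsomGram G H := by
  obtain ⟨e, he⟩ := h
  exact ⟨e, fun x y =>
    (toBilin'_apply' H _ _).symm.trans ((he x y).trans (toBilin'_apply' G x y))⟩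

end Classification

end IntForm

/-- Every positive-definite even unimodular lattice of rank `16` is isometric to
`E₈ ⊕ E₈` or to `D₁₆⁺` (Witt's classification). -/
theorem stmt14 (L : Matrix (Fin 16) (Fin 16) ℤ) (hsym : L.IsSymm) (heven : EvenGram L)
    (hpos : ∀ x : Fin 16 → ℤ, x ≠ 0 → 0 < BF L x x)
    (huni : L.det = 1 ∨ L.det = -1) :
    IsomGram L (dsum (-E8Mat) (-E8Mat)) ∨ IsomGram L D16Mat := by
  have hL : ∀ x y, L.toBilin' x y = BF L x y := toBilin'_apply' L
  have hunimodular : IntForm.IsUnimodular L.toBilin' :=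
    IntForm.isUnimodular_toBilin' hsym (Int.isUnit_iff.mpr huni)
  have hposDef : IntForm.PosDef L.toBilin' := fun x hx => by simpa only [hL] using hpos x hx
  have hisEven : IntForm.IsEven L.toBilin' := fun x => by
    simpa only [hL, even_iff_two_dvd] using heven x
  rcases IntForm.isometric_e8_orthSum_e8_or_d16 hunimodular hposDef hisEven (by simp) with h | h
  · exact .inl (h.symm.trans IntForm.isometric_e8_orthSum_e8).isomGram
  · exact .inr h.symm.isomGram
end
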